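/- arXiv:1511.08020 — 2 statements merged into one kernel-verified Lean document; each statement's English description precedes it below -/
import Mathlib

section
/- (Deception exponent) For finite alphabets X, Y, a distortion measure d with ∀x ∃y d(x,y)=0, distortion level D ≥ 0, and a full-support source distribution P on X, the deception exponent E(D) = liminf_{n→∞} (1/n) min_{S^(n)} log E_P[G^(n)(X^n)] satisfies E(D) = max_Q [R(D,Q) − D(Q‖P)], where R(D,Q) is the rate-distortion function of Q and D(Q‖P) the relative entropy, maximized over distributions Q on X. -/
open scoped BigOperators

/-- A probability distribution on a finite alphabet. -/
def IsProbDist {X : Type*} [Fintype X] (p : X → ℝ) : Prop :=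
  (∀ x, 0 ≤ p x) ∧ ∑ x, p x = 1

/-- Relative entropy (KL divergence), natural log, convention 0 log 0 = 0. -/
noncomputable def klDiv {X : Type*} [Fintype X] (Q P : X → ℝ) : ℝ :=
  ∑ x, Q x * Real.log (Q x / P x)

/-- Mutual information of the joint law Q(x)W(y|x). -/
noncomputable def mutualInfo {X Y : Type*} [Fintype X] [Fintype Y]
    (Q : X → ℝ) (W : X → Y → ℝ) : ℝ :=
  ∑ x, ∑ y, Q x * W x y * Real.log (W x y / (∑ x', Q x' * W x' y))

/-- Rate-distortion function `R(D,Q)`. -/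
noncomputable def rateDistortion {X Y : Type*} [Fintype X] [Fintype Y]
    (d : X → Y → ℝ) (D : ℝ) (Q : X → ℝ) : ℝ :=
  sInf {r | ∃ W : X → Y → ℝ, (∀ x y, 0 ≤ W x y) ∧ (∀ x, ∑ y, W x y = 1) ∧
    (∑ x, ∑ y, Q x * W x y * d x y) ≤ D ∧ r = mutualInfo Q W}

/-- Per-symbol mean distortion between two length-n sequences. -/
noncomputable def meanDist {X Y : Type*} (d : X → Y → ℝ) {n : ℕ}
    (x : Fin n → X) (y : Fin n → Y) : ℝ :=
  (1 / (n : ℝ)) * ∑ i, d (x i) (y i)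

/-- Empirical distribution (type) of a sequence. -/
noncomputable def empDist {X : Type*} [Fintype X] [DecidableEq X] {n : ℕ}
    (x : Fin n → X) (a : X) : ℝ :=
  ((Finset.univ.filter (fun i => x i = a)).card : ℝ) / n

/-- Counting function of an adversarial strategy list: 1-based index of the
first guess within mean distortion `D` of `x` (0 if none exists). -/
noncomputable def countG {X Y : Type*} (d : X → Y → ℝ) (D : ℝ) {n : ℕ}
    (S : List (Fin n → Y)) (x : Fin n → X) : ℕ :=
  sInf {j : ℕ | ∃ y ∈ S.take j, meanDist d x y ≤ D}

/-- n-fold product (i.i.d.) distribution. -/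
noncomputable def prodDist {X : Type*} (P : X → ℝ) {n : ℕ} (x : Fin n → X) : ℝ :=
  ∏ i, P (x i)

/-!
Lower bound. By the Gibbs variational inequality, `log E_P[G]` is at least
`E_Q[log G] - n D(Q‖P)` for every `Q`. To bound `E_Q[log G]`, let `u` be the joint law, averaged
over the positions, of a word drawn from `Q` and its first successful guess. The product over the
positions of the likelihood ratios of `u` against the product of its marginals has `Q`-mean at most
one for each fixed guess, so its value at the guess with number `G`, divided by `G`, has mean at
most a harmonic sum, and Jensen gives `n R(D, Q) ≤ n I(u) ≤ E_Q[log G] + O(log n)`.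

Upper bound. Weight every `y ∈ Y^n` by its maximum likelihood; the total weight is polynomial in
`n`. Guessing greedily, an averaging argument bounds `E_P[G]` by that total times the sum over `x`
of `P(x)` divided by the weight of the words within distortion `D` of `x`. By counting conditional
types this last weight is at least `exp (-n (R(D, Q_x) + o(1)))`, where `Q_x` is the type of `x`,
while `P(x)` is `exp (-n D(Q_x‖P))` times the maximum likelihood of `x`.
-/

open Filter Finset Real Topology

section Logarithms

lemma sum_mul_log_le_log_of_sum_le {ι : Type*} {s : Finset ι} {w t : ι → ℝ} {c : ℝ}
    (hw : ∀ i ∈ s, 0 ≤ w i) (hw_sum : ∑ i ∈ s, w i = 1) (ht : ∀ i ∈ s, w i ≠ 0 → 0 < t i)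
    (hc : ∑ i ∈ s, w i * t i ≤ c) :
    ∑ i ∈ s, w i * log (t i) ≤ log c := by
  classical
  let s' := {i ∈ s | w i ≠ 0}
  have sum_s' (f : ι → ℝ) : ∑ i ∈ s', w i * f i = ∑ i ∈ s, w i * f i :=
    sum_filter_of_ne fun _ _ => left_ne_zero_of_mul
  have hs'_sum : ∑ i ∈ s', w i = 1 := by rw [← hw_sum]; exact sum_filter_ne_zero s
  have hs' {i} (hi : i ∈ s') : 0 < w i ∧ 0 < t i := by
    obtain ⟨his, hi0⟩ := mem_filter.1 hi
    exact ⟨(hw i his).lt_of_ne' hi0, ht i his hi0⟩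
  have hs'_ne : s'.Nonempty := nonempty_of_sum_ne_zero (hs'_sum.trans_ne one_ne_zero)
  have jensen : ∑ i ∈ s', w i * log (t i) ≤ log (∑ i ∈ s', w i * t i) :=
    strictConcaveOn_log_Ioi.concaveOn.le_map_sum (fun i hi => (hs' hi).1.le) hs'_sum
      fun i hi => (hs' hi).2
  calc ∑ i ∈ s, w i * log (t i) = ∑ i ∈ s', w i * log (t i) := (sum_s' _).symm
    _ ≤ log (∑ i ∈ s', w i * t i) := jensen
    _ ≤ log c := log_le_log (sum_pos (fun i hi => mul_pos (hs' hi).1 (hs' hi).2) hs'_ne)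
        ((sum_s' t).trans_le hc)

lemma sum_inv_le_harmonic_card {s : Finset ℕ} (hs : ∀ j ∈ s, 1 ≤ j) :
    ∑ j ∈ s, (j : ℝ)⁻¹ ≤ harmonic #s := by
  induction s using Finset.induction_on_max with
  | empty => simp
  | insert a s ha ih =>
    have has : a ∉ s := fun h => (ha a h).false
    have subset : insert a s ⊆ Icc 1 a := fun j hj => by
      refine mem_Icc.2 ⟨hs j hj, ?_⟩
      rcases mem_insert.1 hj with rfl | hj
      exacts [le_rfl, (ha j hj).le]
    have card_le : #s + 1 ≤ a := by simpa [has] using card_le_card subset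
    rw [sum_insert has, card_insert_of_notMem has, harmonic_succ, add_comm]
    push_cast
    gcongr
    · exact ih fun j hj => hs j (mem_insert_of_mem hj)
    · exact_mod_cast card_le

lemma mul_log_sub_le_log_factorial (n : ℕ) : n * log n - n ≤ log n.factorial := by
  have h : (n : ℝ) ^ n ≤ exp n * n.factorial :=
    (div_le_iff₀ (by positivity)).1 (pow_div_factorial_le_exp n n.cast_nonneg n)
  rcases n.eq_zero_or_pos with rfl | hn
  · simp
  have := log_le_log (by positivity) h
  rw [log_mul (exp_ne_zero _) (by positivity), log_pow, log_exp] at this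
  linarith

lemma log_factorial_le (n : ℕ) : log n.factorial ≤ n * log n - n + (1 + log (n + 1)) := by
  rcases n with _ | n
  · simp
  have h := Stirling.log_stirlingSeq'_antitone n.zero_le
  simp only [Function.comp_apply, Nat.succ_eq_add_one, zero_add, Stirling.stirlingSeq_one,
    Stirling.log_stirlingSeq_formula] at h
  rw [log_div (exp_ne_zero _) (by positivity), log_exp, log_sqrt zero_le_two,
    log_div (by positivity) (exp_ne_zero _), log_exp,
    log_mul two_ne_zero (by positivity)] at h
  have log_mono : log (n + 1 : ℕ) ≤ log ((n + 1 : ℕ) + 1) :=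
    log_le_log (by positivity) (by linarith)
  have log_nonneg : 0 ≤ log (n + 1 : ℕ) := log_natCast_nonneg _
  linarith

lemma tendsto_log_add_mul_natCast_div (a : ℝ) {b : ℝ} (hb : 0 ≤ b) :
    Tendsto (fun n : ℕ => log (a + n * b) / n) atTop (𝓝 0) := by
  rcases hb.eq_or_lt with rfl | hb
  · simpa using tendsto_const_div_atTop_nhds_zero_nat (log a)
  have affine_atTop : Tendsto (fun n : ℕ => a + n * b) atTop atTop :=
    tendsto_atTop_add_const_left _ _ (tendsto_natCast_atTop_atTop.atTop_mul_const hb)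
  refine ((tendsto_pow_log_div_mul_add_atTop b⁻¹ (-(a / b)) 1 (inv_pos.2 hb).ne').comp
    affine_atTop).congr fun n => ?_
  have denominator : b⁻¹ * (a + n * b) + -(a / b) = n := by field_simp; ring
  rw [Function.comp_apply, pow_one, denominator]

lemma tendsto_mul_log_add_mul_div (a b : ℝ) :
    Tendsto (fun n : ℕ => (a * log (n + 1) + b * (1 + log (n + 1))) / n) atTop (𝓝 0) := by
  have limit := ((tendsto_log_add_mul_natCast_div 1 zero_le_one).const_mul (a + b)).add
    (tendsto_const_div_atTop_nhds_zero_nat b)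
  rw [mul_zero, zero_add] at limit
  exact limit.congr fun n => by ring_nf

end Logarithms

section RelativeEntropy

variable {X : Type*} [Fintype X]

/-- The easy half of the Gibbs (Donsker-Varadhan) variational principle. -/
lemma sum_mul_log_sub_klDiv_le_log {Q P φ : X → ℝ} {c : ℝ} (hQ : IsProbDist Q)
    (hP : ∀ x, Q x ≠ 0 → 0 < P x) (hφ : ∀ x, Q x ≠ 0 → 0 < φ x)
    (hPφ : ∀ x, 0 ≤ P x * φ x) (hc : ∑ x, P x * φ x ≤ c) :
    ∑ x, Q x * log (φ x) - klDiv Q P ≤ log c := by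
  have log_ratio (x : X) :
      Q x * log (φ x) - Q x * log (Q x / P x) = Q x * log (P x * φ x / Q x) := by
    by_cases hx : Q x = 0
    · simp [hx]
    rw [log_div hx (hP x hx).ne', log_div (mul_pos (hP x hx) (hφ x hx)).ne' hx,
      log_mul (hP x hx).ne' (hφ x hx).ne']
    ring
  rw [klDiv, ← sum_sub_distrib, sum_congr rfl fun x _ => log_ratio x]
  refine sum_mul_log_le_log_of_sum_le (fun x _ => hQ.1 x) hQ.2
    (fun x _ hx => div_pos (mul_pos (hP x hx) (hφ x hx)) ((hQ.1 x).lt_of_ne' hx))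
    (le_trans (sum_le_sum fun x _ => ?_) hc)
  rcases eq_or_ne (Q x) 0 with hx | hx
  · simpa [hx] using hPφ x
  · rw [mul_div_cancel₀ _ hx]

lemma klDiv_nonneg {Q P : X → ℝ} (hQ : IsProbDist Q) (hP : ∀ x, 0 ≤ P x)
    (hPQ : ∀ x, Q x ≠ 0 → 0 < P x) (hP_sum : ∑ x, P x ≤ 1) : 0 ≤ klDiv Q P := by
  have variational := sum_mul_log_sub_klDiv_le_log (φ := fun _ => 1) hQ hPQ
    (fun _ _ => one_pos) (by simpa using hP) (by simpa using hP_sum)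
  simpa only [log_one, mul_zero, sum_const_zero, zero_sub, neg_nonpos] using variational

end RelativeEntropy

section MutualInformation

variable {X Y : Type*} [Fintype X] [Fintype Y]

/-- Shannon entropy, in nats, of a distribution on a finite alphabet. -/
noncomputable def entropy (p : X → ℝ) : ℝ := ∑ a, negMulLog (p a)

/-- First marginal of a joint law on `X × Y`. -/
def fstMarginal (v : X × Y → ℝ) (a : X) : ℝ := ∑ b, v (a, b)

/-- Second marginal of a joint law on `X × Y`. -/
def sndMarginal (v : X × Y → ℝ) (b : Y) : ℝ := ∑ a, v (a, b)

/-- Mutual information as a function of the joint law. Unlike in `mutualInfo`, no channel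
appears, so that it makes sense for empirical laws and is visibly continuous. -/
noncomputable def jointInfo (v : X × Y → ℝ) : ℝ :=
  entropy (fstMarginal v) + entropy (sndMarginal v) - entropy v

lemma continuous_jointInfo : Continuous (jointInfo (X := X) (Y := Y)) := by
  unfold jointInfo entropy fstMarginal sndMarginal
  fun_prop

lemma le_fstMarginal {X : Type*} {v : X × Y → ℝ} (hv : 0 ≤ v) (p : X × Y) :
    v p ≤ fstMarginal v p.1 :=
  single_le_sum (f := fun b => v (p.1, b)) (fun b _ => hv (p.1, b)) (mem_univ p.2)

lemma le_sndMarginal {Y : Type*} {v : X × Y → ℝ} (hv : 0 ≤ v) (p : X × Y) :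
    v p ≤ sndMarginal v p.2 :=
  single_le_sum (f := fun a => v (a, p.2)) (fun a _ => hv (a, p.2)) (mem_univ p.1)

lemma fstMarginal_nonneg {X : Type*} {v : X × Y → ℝ} (hv : 0 ≤ v) (a : X) :
    0 ≤ fstMarginal v a := sum_nonneg fun b _ => hv (a, b)

lemma sndMarginal_nonneg {Y : Type*} {v : X × Y → ℝ} (hv : 0 ≤ v) (b : Y) :
    0 ≤ sndMarginal v b := sum_nonneg fun a _ => hv (a, b)

lemma sum_fstMarginal (v : X × Y → ℝ) : ∑ a, fstMarginal v a = ∑ p, v p :=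
  (Fintype.sum_prod_type v).symm

lemma sum_sndMarginal (v : X × Y → ℝ) : ∑ b, sndMarginal v b = ∑ p, v p :=
  (Fintype.sum_prod_type_right v).symm

lemma jointInfo_eq_klDiv {v : X × Y → ℝ} (hv : 0 ≤ v) :
    jointInfo v = klDiv v fun p => fstMarginal v p.1 * sndMarginal v p.2 := by
  have fst_entropy : entropy (fstMarginal v) = -∑ p, v p * log (fstMarginal v p.1) := by
    simp only [entropy, negMulLog_eq_neg, Fintype.sum_prod_type, sum_neg_distrib, ← sum_mul]
    rfl
  have snd_entropy : entropy (sndMarginal v) = -∑ p, v p * log (sndMarginal v p.2) := by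
    simp only [entropy, negMulLog_eq_neg, Fintype.sum_prod_type_right, sum_neg_distrib,
      ← sum_mul]
    rfl
  rw [jointInfo, fst_entropy, snd_entropy, entropy, klDiv, ← sum_neg_distrib, ← sum_neg_distrib,
    ← sum_add_distrib, ← sum_sub_distrib]
  refine sum_congr rfl fun p _ => ?_
  rcases (hv p).eq_or_lt with hp | hp
  · simp [← hp]
  have hfst := (hp.trans_le (le_fstMarginal hv p)).ne'
  have hsnd := (hp.trans_le (le_sndMarginal hv p)).ne'
  rw [log_div hp.ne' (mul_ne_zero hfst hsnd), log_mul hfst hsnd, negMulLog]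
  ring

lemma jointInfo_nonneg {v : X × Y → ℝ} (hv : IsProbDist v) : 0 ≤ jointInfo v := by
  rw [jointInfo_eq_klDiv hv.1]
  refine klDiv_nonneg hv
    (fun p => mul_nonneg (fstMarginal_nonneg hv.1 p.1) (sndMarginal_nonneg hv.1 p.2))
    (fun p hp => ?_) (le_of_eq ?_)
  · have hvp := (hv.1 p).lt_of_ne' hp
    exact mul_pos (hvp.trans_le (le_fstMarginal hv.1 p)) (hvp.trans_le (le_sndMarginal hv.1 p))
  · rw [Fintype.sum_prod_type, ← Fintype.sum_mul_sum, sum_fstMarginal, sum_sndMarginal, hv.2,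
      one_mul]

end MutualInformation

section RateDistortion

variable {X Y : Type*} [Fintype X] [Fintype Y]

lemma fstMarginal_mul_channel {X : Type*} {W : X → Y → ℝ} (hW_sum : ∀ a, ∑ b, W a b = 1)
    (Q : X → ℝ) : fstMarginal (fun p : X × Y => Q p.1 * W p.1 p.2) = Q :=
  funext fun a => by simp only [fstMarginal, ← mul_sum, hW_sum, mul_one]

lemma mutualInfo_eq_jointInfo {Q : X → ℝ} {W : X → Y → ℝ} (hQ : ∀ a, 0 ≤ Q a)
    (hW : ∀ a b, 0 ≤ W a b) (hW_sum : ∀ a, ∑ b, W a b = 1) :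
    mutualInfo Q W = jointInfo fun p : X × Y => Q p.1 * W p.1 p.2 := by
  rw [jointInfo_eq_klDiv fun p => mul_nonneg (hQ p.1) (hW p.1 p.2), klDiv, mutualInfo,
    Fintype.sum_prod_type]
  refine sum_congr rfl fun a _ => sum_congr rfl fun b _ => ?_
  rcases eq_or_ne (Q a) 0 with ha | ha
  · simp [ha]
  · rw [fstMarginal_mul_channel hW_sum, mul_div_mul_left _ _ ha, sndMarginal]

lemma rateDistortion_le_jointInfo [Nonempty Y] {d : X → Y → ℝ} {D : ℝ} {v : X × Y → ℝ}
    (hv : IsProbDist v) (hvd : ∑ p, v p * d p.1 p.2 ≤ D) :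
    rateDistortion d D (fstMarginal v) ≤ jointInfo v := by
  let W (a : X) (b : Y) : ℝ :=
    if fstMarginal v a = 0 then (Fintype.card Y : ℝ)⁻¹ else v (a, b) / fstMarginal v a
  have hW_nonneg (a : X) (b : Y) : 0 ≤ W a b := by
    have := fstMarginal_nonneg hv.1 a
    have := hv.1 (a, b)
    dsimp only [W]
    split_ifs <;> positivity
  have hW_sum (a : X) : ∑ b, W a b = 1 := by
    dsimp only [W]
    split_ifs with ha
    · simp
    · rw [← sum_div]; exact div_self ha
  have hW_joint (p : X × Y) : fstMarginal v p.1 * W p.1 p.2 = v p := by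
    dsimp only [W]
    split_ifs with ha
    · rw [ha, zero_mul]
      exact (hv.1 p).antisymm ((le_fstMarginal hv.1 p).trans_eq ha)
    · exact mul_div_cancel₀ _ ha
  refine csInf_le ⟨0, ?_⟩ ⟨W, hW_nonneg, hW_sum, ?_, ?_⟩
  · rintro _ ⟨V, hV, hV_sum, -, rfl⟩
    rw [mutualInfo_eq_jointInfo (fstMarginal_nonneg hv.1) hV hV_sum]
    refine jointInfo_nonneg ⟨fun p => mul_nonneg (fstMarginal_nonneg hv.1 _) (hV _ _), ?_⟩
    simp only [Fintype.sum_prod_type, ← mul_sum, hV_sum, mul_one, sum_fstMarginal, hv.2]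
  · simpa only [← Fintype.sum_prod_type', hW_joint] using hvd
  · simp only [mutualInfo_eq_jointInfo (fstMarginal_nonneg hv.1) hW_nonneg hW_sum, hW_joint]

lemma exists_jointInfo_lt_rateDistortion_add {d : X → Y → ℝ} {D : ℝ} {Q : X → ℝ} {ε : ℝ}
    (hQ : IsProbDist Q) (hmin : ∀ a, ∃ b, d a b ≤ D) (hε : 0 < ε) :
    ∃ v : X × Y → ℝ, 0 ≤ v ∧ fstMarginal v = Q ∧ ∑ p, v p * d p.1 p.2 ≤ D ∧
      jointInfo v < rateDistortion d D Q + ε := by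
  classical
  choose f hf using hmin
  have channel_exists : {r | ∃ W : X → Y → ℝ, (∀ a b, 0 ≤ W a b) ∧ (∀ a, ∑ b, W a b = 1) ∧
      ∑ a, ∑ b, Q a * W a b * d a b ≤ D ∧ r = mutualInfo Q W}.Nonempty := by
    refine ⟨_, fun a b => if b = f a then 1 else 0, fun a b => by positivity, fun a => by simp,
      ?_, rfl⟩
    calc ∑ a, ∑ b, Q a * (if b = f a then 1 else 0) * d a b
        = ∑ a, Q a * d a (f a) := by simp
      _ ≤ ∑ a, Q a * D := by gcongr with a; exacts [hQ.1 a, hf a]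
      _ = D := by rw [← sum_mul, hQ.2, one_mul]
  obtain ⟨_, ⟨W, hW, hW_sum, hWd, rfl⟩, hlt⟩ :=
    exists_lt_of_csInf_lt channel_exists (lt_add_of_pos_right (rateDistortion d D Q) hε)
  refine ⟨fun p => Q p.1 * W p.1 p.2, fun p => mul_nonneg (hQ.1 _) (hW _ _),
    fstMarginal_mul_channel hW_sum Q, ?_, ?_⟩
  · rwa [Fintype.sum_prod_type]
  · rwa [← mutualInfo_eq_jointInfo hQ.1 hW hW_sum]

end RateDistortion

section ProductDistribution

variable {X : Type*} {n : ℕ}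

lemma prodDist_nonneg {P : X → ℝ} (hP : ∀ a, 0 ≤ P a) (x : Fin n → X) : 0 ≤ prodDist P x :=
  prod_nonneg fun i _ => hP (x i)

lemma prodDist_pos {P : X → ℝ} (hP : ∀ a, 0 < P a) (x : Fin n → X) : 0 < prodDist P x :=
  prod_pos fun i _ => hP (x i)

lemma ne_zero_of_prodDist_ne_zero {P : X → ℝ} {x : Fin n → X} (hx : prodDist P x ≠ 0)
    (i : Fin n) : P (x i) ≠ 0 :=
  prod_ne_zero_iff.1 hx i (mem_univ i)

variable [Fintype X]

lemma sum_prodDist_mul_prod (Q : X → ℝ) (g : Fin n → X → ℝ) :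
    ∑ x, prodDist Q x * ∏ i, g i (x i) = ∏ i, ∑ a, Q a * g i a := by
  simp only [prodDist, ← prod_mul_distrib]
  exact (Fintype.prod_sum fun i a => Q a * g i a).symm

lemma isProbDist_prodDist {Q : X → ℝ} (hQ : IsProbDist Q) :
    IsProbDist (prodDist Q (n := n)) :=
  ⟨prodDist_nonneg hQ.1, by simpa [hQ.2] using sum_prodDist_mul_prod Q fun (_ : Fin n) _ => 1⟩

lemma sum_prodDist_mul_apply {Q : X → ℝ} (hQ : IsProbDist Q) (h : X → ℝ) (k : Fin n) :
    ∑ x, prodDist Q x * h (x k) = ∑ a, Q a * h a := by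
  have product := sum_prodDist_mul_prod Q fun i a => if i = k then h a else 1
  have factor (i : Fin n) :
      ∑ a, Q a * (if i = k then h a else 1) = if i = k then ∑ a, Q a * h a else 1 := by
    split_ifs <;> simp [hQ.2]
  simpa only [factor, Fintype.prod_ite_eq'] using product

lemma klDiv_prodDist {Q P : X → ℝ} (hQ : IsProbDist Q) (hP : ∀ a, 0 < P a) :
    klDiv (prodDist Q (n := n)) (prodDist P) = n * klDiv Q P := by
  have log_ratio (x : Fin n → X) : prodDist Q x * log (prodDist Q x / prodDist P x)
      = ∑ i, prodDist Q x * log (Q (x i) / P (x i)) := by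
    by_cases hx : prodDist Q x = 0
    · simp [hx]
    · rw [← mul_sum, prodDist, prodDist, ← prod_div_distrib, log_prod fun i _ =>
        div_ne_zero (ne_zero_of_prodDist_ne_zero hx i) (hP (x i)).ne']
  calc klDiv (prodDist Q (n := n)) (prodDist P)
      = ∑ i : Fin n, ∑ x, prodDist Q x * log (Q (x i) / P (x i)) := by
        rw [klDiv, sum_congr rfl fun x _ => log_ratio x, sum_comm]
    _ = ∑ _i : Fin n, klDiv Q P :=
        sum_congr rfl fun i _ => sum_prodDist_mul_apply hQ (fun a => log (Q a / P a)) i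
    _ = n * klDiv Q P := by rw [sum_const, card_univ, Fintype.card_fin, nsmul_eq_mul]

end ProductDistribution

section Types

variable {X Y : Type*} [DecidableEq X] [DecidableEq Y] {n : ℕ}

/-- Number of occurrences of a letter in a sequence: the type of the sequence before
normalisation by its length. -/
def letterCount (x : Fin n → X) (a : X) : ℕ := #{i | x i = a}

lemma letterCount_le (x : Fin n → X) (a : X) : letterCount x a ≤ n :=
  (card_filter_le _ _).trans_eq (card_fin n)

variable [Fintype X] [Fintype Y]

lemma sum_letterCount (x : Fin n → X) : ∑ a, letterCount x a = n :=
  (card_eq_sum_card_fiberwise fun i _ => mem_univ (x i)).symm.trans (card_fin n)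

lemma natCast_mul_empDist (x : Fin n → X) (a : X) : n * empDist x a = letterCount x a := by
  rcases eq_or_ne n 0 with rfl | hn
  · simp [letterCount]
  · exact mul_div_cancel₀ _ (Nat.cast_ne_zero.2 hn)

lemma sum_comp_eq_mul_sum_empDist (x : Fin n → X) (g : X → ℝ) :
    ∑ i, g (x i) = n * ∑ a, empDist x a * g a := by
  rw [mul_sum, ← sum_fiberwise univ x]
  refine sum_congr rfl fun a _ => ?_
  rw [← mul_assoc, natCast_mul_empDist, letterCount, ← nsmul_eq_mul, ← sum_const]
  exact sum_congr rfl fun i hi => by rw [(mem_filter.1 hi).2]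

lemma empDist_eq_of_letterCount_eq {x y : Fin n → X} (h : letterCount x = letterCount y) :
    empDist x = empDist y :=
  funext fun a => congrArg (fun k : ℕ => (k / n : ℝ)) (congrFun h a)

lemma empDist_nonneg (x : Fin n → X) : 0 ≤ empDist x := fun _ => by
  unfold empDist; positivity

lemma empDist_le_one (x : Fin n → X) (a : X) : empDist x a ≤ 1 :=
  div_le_one_of_le₀ (Nat.cast_le.2 (letterCount_le x a)) n.cast_nonneg

lemma isProbDist_empDist [NeZero n] (x : Fin n → X) : IsProbDist (empDist x) := by
  refine ⟨empDist_nonneg x, ?_⟩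
  have total := sum_comp_eq_mul_sum_empDist x fun _ => 1
  simpa [NeZero.ne n] using total.symm

lemma empDist_apply_pos (x : Fin n → X) (i : Fin n) : 0 < empDist x (x i) :=
  div_pos (Nat.cast_pos.2 (card_pos.2 ⟨i, by simp⟩)) (Nat.cast_pos.2 i.pos)

lemma fstMarginal_empDist (z : Fin n → X × Y) :
    fstMarginal (empDist z) = empDist (Prod.fst ∘ z) := by
  funext a
  simp only [fstMarginal, empDist, ← sum_div, ← Nat.cast_sum]
  congr 2
  rw [card_eq_sum_card_fiberwise (f := fun i => (z i).2) (t := univ) fun _ _ => mem_univ _]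
  simp [filter_filter, Prod.ext_iff]

lemma sndMarginal_empDist (z : Fin n → X × Y) :
    sndMarginal (empDist z) = empDist (Prod.snd ∘ z) := by
  funext b
  simp only [sndMarginal, empDist, ← sum_div, ← Nat.cast_sum]
  congr 2
  rw [card_eq_sum_card_fiberwise (f := fun i => (z i).1) (t := univ) fun _ _ => mem_univ _]
  simp [filter_filter, Prod.ext_iff, and_comm]

lemma meanDist_eq_sum_empDist [NeZero n] (d : X → Y → ℝ) (z : Fin n → X × Y) :
    meanDist d (Prod.fst ∘ z) (Prod.snd ∘ z) = ∑ p, empDist z p * d p.1 p.2 := by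
  have total := sum_comp_eq_mul_sum_empDist z fun p => d p.1 p.2
  simp only [meanDist, Function.comp_apply]
  rw [total, one_div, inv_mul_cancel_left₀ (Nat.cast_ne_zero.2 (NeZero.ne n))]

lemma mul_entropy_empDist (x : Fin n → X) :
    n * entropy (empDist x) = n * log n - ∑ a, letterCount x a * log (letterCount x a) := by
  have term (a : X) : n * negMulLog (empDist x a)
      = letterCount x a * log n - letterCount x a * log (letterCount x a) := by
    rw [negMulLog, neg_mul, mul_neg, ← mul_assoc, natCast_mul_empDist]
    by_cases ha : letterCount x a = 0
    · simp [ha]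
    have hn : n ≠ 0 := ((Nat.pos_of_ne_zero ha).trans_le (letterCount_le x a)).ne'
    rw [show empDist x a = letterCount x a / n from rfl,
      log_div (Nat.cast_ne_zero.2 ha) (Nat.cast_ne_zero.2 hn)]
    ring
  rw [entropy, mul_sum, sum_congr rfl fun a _ => term a, sum_sub_distrib, ← sum_mul,
    ← Nat.cast_sum, sum_letterCount]

lemma le_sum_log_factorial_letterCount (x : Fin n → X) :
    n * log n - n - n * entropy (empDist x) ≤ ∑ a, log (letterCount x a).factorial := by
  calc n * log n - n - n * entropy (empDist x)
      = ∑ a, (letterCount x a * log (letterCount x a) - letterCount x a : ℝ) := by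
        rw [sum_sub_distrib, ← Nat.cast_sum, sum_letterCount, mul_entropy_empDist]; ring
    _ ≤ ∑ a, log (letterCount x a).factorial := by
        gcongr; exact mul_log_sub_le_log_factorial _

lemma sum_log_factorial_letterCount_le (x : Fin n → X) :
    ∑ a, log (letterCount x a).factorial
      ≤ n * log n - n - n * entropy (empDist x) + Fintype.card X * (1 + log (n + 1)) := by
  calc ∑ a, log (letterCount x a).factorial
      ≤ ∑ a, (letterCount x a * log (letterCount x a) - letterCount x a + (1 + log (n + 1))) := by
        gcongr with a
        refine (log_factorial_le _).trans ?_
        gcongr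
        exact letterCount_le x a
    _ = _ := by
        rw [sum_add_distrib, sum_sub_distrib, ← Nat.cast_sum, sum_letterCount,
          mul_entropy_empDist, sum_const, card_univ, nsmul_eq_mul]
        ring

/-- Largest probability that an i.i.d. source can assign to the sequence `x`; the maximum is
attained at the empirical law of `x`. -/
noncomputable def maxLikelihood (x : Fin n → X) : ℝ := prodDist (empDist x) x

lemma maxLikelihood_pos (x : Fin n → X) : 0 < maxLikelihood x := by
  unfold maxLikelihood prodDist
  exact prod_pos fun i _ => empDist_apply_pos x i

lemma log_maxLikelihood (x : Fin n → X) :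
    log (maxLikelihood x) = -(n * entropy (empDist x)) := by
  rw [maxLikelihood, prodDist, log_prod fun i _ => (empDist_apply_pos x i).ne',
    sum_comp_eq_mul_sum_empDist x fun a => log (empDist x a)]
  simp [entropy, negMulLog_eq_neg]

lemma prodDist_mul_exp_klDiv_empDist {P : X → ℝ} (hP : ∀ a, 0 < P a) (x : Fin n → X) :
    prodDist P x * exp (n * klDiv (empDist x) P) = maxLikelihood x := by
  rw [klDiv, ← sum_comp_eq_mul_sum_empDist x fun a => log (empDist x a / P a), exp_sum,
    prodDist, ← prod_mul_distrib]
  refine prod_congr rfl fun i _ => ?_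
  rw [exp_log (div_pos (empDist_apply_pos x i) (hP _)), mul_div_cancel₀ _ (hP _).ne']

/-- There are at most `(n + 1) ^ |X|` types, and on each of them `maxLikelihood` coincides with
a single product distribution. -/
lemma sum_maxLikelihood_le [NeZero n] :
    ∑ x : Fin n → X, maxLikelihood x ≤ (n + 1) ^ Fintype.card X := by
  let types := Fintype.piFinset fun _ : X => range (n + 1)
  have types_card : (#types : ℝ) = (n + 1) ^ Fintype.card X := by simp [types]
  have letterCount_mem (x : Fin n → X) : letterCount x ∈ types :=
    Fintype.mem_piFinset.2 fun a => mem_range.2 (Nat.lt_succ_of_le (letterCount_le x a))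
  have fiber_sum_le (c : X → ℕ) : ∑ x with letterCount (n := n) x = c, maxLikelihood x ≤ 1 := by
    rcases ({x | letterCount (n := n) x = c} : Finset _).eq_empty_or_nonempty with h | ⟨x₀, hx₀⟩
    · simp [h]
    have same_type {x : Fin n → X} (hx : x ∈ ({x | letterCount x = c} : Finset _)) :
        empDist x = empDist x₀ :=
      empDist_eq_of_letterCount_eq ((mem_filter.1 hx).2.trans (mem_filter.1 hx₀).2.symm)
    have hprob := isProbDist_prodDist (n := n) (isProbDist_empDist x₀)
    calc ∑ x with letterCount (n := n) x = c, maxLikelihood x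
        = ∑ x with letterCount (n := n) x = c, prodDist (empDist x₀) x :=
          sum_congr rfl fun x hx => by rw [maxLikelihood, same_type hx]
      _ ≤ ∑ x, prodDist (empDist x₀) x :=
          sum_le_univ_sum_of_nonneg hprob.1
      _ = 1 := hprob.2
  calc ∑ x : Fin n → X, maxLikelihood x
      = ∑ c ∈ types, ∑ x with letterCount (n := n) x = c, maxLikelihood x :=
        (sum_fiberwise_of_maps_to (fun x _ => letterCount_mem x) _).symm
    _ ≤ ∑ _c ∈ types, (1 : ℝ) := sum_le_sum fun c _ => fiber_sum_le c
    _ = (n + 1) ^ Fintype.card X := by rw [sum_const, nsmul_one, types_card]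

end Types

section CountingFunction

variable {X Y : Type*} {d : X → Y → ℝ} {D : ℝ} {n : ℕ} {S : List (Fin n → Y)} {x : Fin n → X}

open scoped Classical in
lemma countG_eq_findIdx_add_one (hx : ∃ y ∈ S, meanDist d x y ≤ D) :
    countG d D S x = S.findIdx (fun y => meanDist d x y ≤ D) + 1 := by
  have hlt := List.findIdx_lt_length_of_exists (p := fun y => decide (meanDist d x y ≤ D))
    (by simpa using hx)
  refine IsLeast.csInf_eq ⟨⟨_, List.mem_take_iff_getElem.2 ⟨_, by simpa using hlt, rfl⟩,
    of_decide_eq_true (List.findIdx_getElem (w := hlt))⟩, ?_⟩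
  rintro j ⟨y, hy, hyD⟩
  obtain ⟨i, hi, rfl⟩ := List.mem_take_iff_getElem.1 hy
  by_contra! hj
  have hi_lt : i < S.findIdx (fun y => meanDist d x y ≤ D) := by omega
  exact of_decide_eq_false (List.not_of_lt_findIdx hi_lt) hyD

lemma one_le_countG (hx : ∃ y ∈ S, meanDist d x y ≤ D) : 1 ≤ countG d D S x := by
  classical
  rw [countG_eq_findIdx_add_one hx]
  exact Nat.le_add_left 1 _

lemma exists_meanDist_guess_countG_le [Nonempty Y] (d : X → Y → ℝ) (D : ℝ)
    (S : List (Fin n → Y)) :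
    ∃ guess : ℕ → Fin n → Y, ∀ x, (∃ y ∈ S, meanDist d x y ≤ D) →
      meanDist d x (guess (countG d D S x)) ≤ D := by
  classical
  refine ⟨fun j => S.getD (j - 1) (Classical.arbitrary _), fun x hx => ?_⟩
  have hlt := List.findIdx_lt_length_of_exists (p := fun y => decide (meanDist d x y ≤ D))
    (by simpa using hx)
  simp only [countG_eq_findIdx_add_one hx, Nat.add_sub_cancel]
  rw [List.getD_eq_getElem _ _ hlt]
  exact of_decide_eq_true (List.findIdx_getElem (w := hlt))

end CountingFunction

section Converse

/-- For a fixed guess number `j` the ratio `ψ j` has mean at most one, so `ψ (G x) x / G x` has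
mean at most the harmonic sum over the values of `G`. -/
lemma sum_mul_log_sub_sum_mul_log_le {α : Type*} [Fintype α] {w : α → ℝ} {ψ : ℕ → α → ℝ}
    {G : α → ℕ} (hw : IsProbDist w) (hψ : ∀ j x, 0 ≤ ψ j x)
    (hψ_sum : ∀ j, ∑ x, w x * ψ j x ≤ 1) (hψ_pos : ∀ x, w x ≠ 0 → 0 < ψ (G x) x)
    (hG : ∀ x, 1 ≤ G x) :
    ∑ x, w x * log (ψ (G x) x) - ∑ x, w x * log (G x) ≤ log (1 + log (Fintype.card α)) := by
  classical
  have hG_pos (x : α) : (0 : ℝ) < G x := Nat.cast_pos.2 (hG x)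
  have ratio_sum_le : ∑ x, w x * (ψ (G x) x / G x) ≤ 1 + log (Fintype.card α) :=
    calc ∑ x, w x * (ψ (G x) x / G x)
        = ∑ j ∈ univ.image G, ∑ x with G x = j, w x * ψ j x * (j : ℝ)⁻¹ := by
          rw [← sum_fiberwise_of_maps_to fun x _ => mem_image_of_mem G (mem_univ x)]
          refine sum_congr rfl fun j _ => sum_congr rfl fun x hx => ?_
          rw [(mem_filter.1 hx).2, div_eq_mul_inv, mul_assoc]
      _ ≤ ∑ j ∈ univ.image G, (j : ℝ)⁻¹ := by
          refine sum_le_sum fun j _ => ?_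
          rw [← sum_mul]
          refine mul_le_of_le_one_left (by positivity) (le_trans ?_ (hψ_sum j))
          exact sum_le_univ_sum_of_nonneg fun x => mul_nonneg (hw.1 x) (hψ j x)
      _ ≤ harmonic #(univ.image G) := sum_inv_le_harmonic_card (by simpa using hG)
      _ ≤ 1 + log #(univ.image G) := harmonic_le_one_add_log _
      _ ≤ 1 + log (Fintype.card α) := by
          have hα : Nonempty α :=
            univ_nonempty_iff.1 (nonempty_of_sum_ne_zero (hw.2.trans_ne one_ne_zero))
          have := (univ_nonempty (α := α)).image G
          gcongr
          exact card_image_le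
  calc ∑ x, w x * log (ψ (G x) x) - ∑ x, w x * log (G x)
      = ∑ x, w x * log (ψ (G x) x / G x) := by
        rw [← sum_sub_distrib]
        refine sum_congr rfl fun x _ => ?_
        by_cases hx : w x = 0
        · simp [hx]
        · rw [log_div (hψ_pos x hx).ne' (hG_pos x).ne', mul_sub]
    _ ≤ log (1 + log (Fintype.card α)) :=
        sum_mul_log_le_log_of_sum_le (fun x _ => hw.1 x) hw.2
          (fun x _ hx => div_pos (hψ_pos x hx) (hG_pos x)) ratio_sum_le

variable {X Y : Type*} [Fintype X] [Fintype Y]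

section InformationDensity

variable {v : X × Y → ℝ}

/-- Likelihood ratio of a joint law against the product of its marginals; its logarithm is the
information density. -/
noncomputable def infoRatio (v : X × Y → ℝ) (p : X × Y) : ℝ :=
  v p / (fstMarginal v p.1 * sndMarginal v p.2)

lemma infoRatio_nonneg (hv : 0 ≤ v) (p : X × Y) : 0 ≤ infoRatio v p :=
  div_nonneg (hv p) (mul_nonneg (fstMarginal_nonneg hv _) (sndMarginal_nonneg hv _))

lemma infoRatio_pos (hv : 0 ≤ v) {p : X × Y} (hp : 0 < v p) : 0 < infoRatio v p :=
  div_pos hp (mul_pos (hp.trans_le (le_fstMarginal hv p)) (hp.trans_le (le_sndMarginal hv p)))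

lemma jointInfo_eq_sum_mul_log_infoRatio (hv : 0 ≤ v) :
    jointInfo v = ∑ p, v p * log (infoRatio v p) :=
  jointInfo_eq_klDiv hv

lemma sum_fstMarginal_mul_infoRatio_le_one (hv : 0 ≤ v) (b : Y) :
    ∑ a, fstMarginal v a * infoRatio v (a, b) ≤ 1 := by
  calc ∑ a, fstMarginal v a * infoRatio v (a, b)
      ≤ ∑ a, v (a, b) / sndMarginal v b := by
        refine sum_le_sum fun a _ => ?_
        rw [infoRatio, ← mul_div_assoc]
        rcases eq_or_ne (fstMarginal v a) 0 with ha | ha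
        · simpa [ha] using div_nonneg (hv (a, b)) (sndMarginal_nonneg hv b)
        · rw [mul_div_mul_left _ _ ha]
    _ = sndMarginal v b / sndMarginal v b := (sum_div _ _ _).symm
    _ ≤ 1 := div_self_le_one _

end InformationDensity

variable {n : ℕ}

lemma sum_prodDist_mul_empDist [DecidableEq X] [NeZero n] {Q : X → ℝ} (hQ : IsProbDist Q)
    (a : X) : ∑ x : Fin n → X, prodDist Q x * empDist x a = Q a := by
  refine mul_left_cancel₀ (Nat.cast_ne_zero.2 (NeZero.ne n)) ?_
  let indicator (b : X) : ℝ := if b = a then 1 else 0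
  calc (n : ℝ) * ∑ x : Fin n → X, prodDist Q x * empDist x a
      = ∑ x : Fin n → X, prodDist Q x * ∑ i, indicator (x i) := by
        rw [mul_sum]
        refine sum_congr rfl fun x _ => ?_
        rw [sum_comp_eq_mul_sum_empDist x indicator, mul_left_comm]
        simp [indicator]
    _ = ∑ i : Fin n, ∑ x, prodDist Q x * indicator (x i) := by
        simp only [mul_sum]; exact sum_comm
    _ = ∑ _i : Fin n, Q a :=
        sum_congr rfl fun i _ => (sum_prodDist_mul_apply hQ indicator i).trans (by simp [indicator])
    _ = n * Q a := by simp

open scoped Classical in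
/-- Joint law of a source letter and its reproduction at a uniformly random position, for an
i.i.d. source word `x` reproduced as `code x`. -/
noncomputable def codeLaw (Q : X → ℝ) (code : (Fin n → X) → Fin n → Y) (p : X × Y) : ℝ :=
  ∑ x, prodDist Q x * empDist (fun i => (x i, code x i)) p

section CodeLaw

variable {Q : X → ℝ}

open scoped Classical in
lemma sum_codeLaw_mul (Q : X → ℝ) (code : (Fin n → X) → Fin n → Y) (g : X × Y → ℝ) :
    ∑ p, codeLaw Q code p * g p
      = ∑ x, prodDist Q x * ∑ p, empDist (fun i => (x i, code x i)) p * g p := by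
  simp only [codeLaw, sum_mul, mul_sum, mul_assoc]
  exact sum_comm

lemma codeLaw_nonneg (hQ : ∀ a, 0 ≤ Q a) (code : (Fin n → X) → Fin n → Y) :
    0 ≤ codeLaw Q code := by
  classical
  exact fun _ => sum_nonneg fun x _ => mul_nonneg (prodDist_nonneg hQ x) (empDist_nonneg _ _)

lemma codeLaw_apply_pos (hQ : ∀ a, 0 ≤ Q a) (code : (Fin n → X) → Fin n → Y) {x : Fin n → X}
    (hx : prodDist Q x ≠ 0) (i : Fin n) : 0 < codeLaw Q code (x i, code x i) := by
  classical
  exact sum_pos' (fun t _ => mul_nonneg (prodDist_nonneg hQ t) (empDist_nonneg _ _))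
    ⟨x, mem_univ x, mul_pos ((prodDist_nonneg hQ x).lt_of_ne' hx)
      (empDist_apply_pos (fun i => (x i, code x i)) i)⟩

lemma fstMarginal_codeLaw [NeZero n] (hQ : IsProbDist Q) (code : (Fin n → X) → Fin n → Y) :
    fstMarginal (codeLaw Q code) = Q := by
  classical
  funext a
  calc fstMarginal (codeLaw Q code) a
      = ∑ x, prodDist Q x * fstMarginal (empDist (fun i => (x i, code x i))) a := by
        simp only [fstMarginal, codeLaw, mul_sum]
        exact sum_comm
    _ = ∑ x : Fin n → X, prodDist Q x * empDist x a := by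
        simp only [fstMarginal_empDist, Function.comp_def]
    _ = Q a := sum_prodDist_mul_empDist hQ a

lemma isProbDist_codeLaw [NeZero n] (hQ : IsProbDist Q) (code : (Fin n → X) → Fin n → Y) :
    IsProbDist (codeLaw Q code) :=
  ⟨codeLaw_nonneg hQ.1 code, by rw [← sum_fstMarginal, fstMarginal_codeLaw hQ, hQ.2]⟩

lemma rateDistortion_le_jointInfo_codeLaw [Nonempty Y] [NeZero n] {d : X → Y → ℝ} {D : ℝ}
    {code : (Fin n → X) → Fin n → Y} (hQ : IsProbDist Q)
    (hcode : ∀ x, meanDist d x (code x) ≤ D) :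
    rateDistortion d D Q ≤ jointInfo (codeLaw Q code) := by
  classical
  have mean_dist_le : ∑ p, codeLaw Q code p * d p.1 p.2 ≤ D := by
    calc ∑ p, codeLaw Q code p * d p.1 p.2 = ∑ x, prodDist Q x * meanDist d x (code x) := by
          rw [sum_codeLaw_mul Q code fun p => d p.1 p.2]
          exact sum_congr rfl fun x _ => congrArg (prodDist Q x * ·)
            (meanDist_eq_sum_empDist d fun i => (x i, code x i)).symm
      _ ≤ ∑ x : Fin n → X, prodDist Q x * D := by
          gcongr with x
          exacts [prodDist_nonneg hQ.1 x, hcode x]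
      _ = D := by rw [← sum_mul, (isProbDist_prodDist hQ).2, one_mul]
  simpa only [fstMarginal_codeLaw hQ] using
    rateDistortion_le_jointInfo (isProbDist_codeLaw hQ code) mean_dist_le

lemma mul_jointInfo_codeLaw [NeZero n] (hQ : IsProbDist Q) (code : (Fin n → X) → Fin n → Y) :
    n * jointInfo (codeLaw Q code)
      = ∑ x, prodDist Q x * log (∏ i, infoRatio (codeLaw Q code) (x i, code x i)) := by
  classical
  have hlaw := codeLaw_nonneg hQ.1 code
  rw [jointInfo_eq_sum_mul_log_infoRatio hlaw, sum_codeLaw_mul, mul_sum]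
  refine sum_congr rfl fun x _ => ?_
  by_cases hx : prodDist Q x = 0
  · simp [hx]
  · rw [log_prod fun i _ => (infoRatio_pos hlaw (codeLaw_apply_pos hQ.1 code hx i)).ne',
      mul_left_comm, ← sum_comp_eq_mul_sum_empDist (fun i => (x i, code x i)) fun p =>
        log (infoRatio (codeLaw Q code) p)]

lemma mul_jointInfo_codeLaw_le [NeZero n] (hQ : IsProbDist Q) (guess : ℕ → Fin n → Y)
    {G : (Fin n → X) → ℕ} (hG : ∀ x, 1 ≤ G x) :
    n * jointInfo (codeLaw Q fun x => guess (G x))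
      ≤ ∑ x, prodDist Q x * log (G x) + log (1 + n * log (Fintype.card X)) := by
  let code (x : Fin n → X) : Fin n → Y := guess (G x)
  let u := codeLaw Q code
  have hu_nonneg : 0 ≤ u := codeLaw_nonneg hQ.1 code
  let ψ (j : ℕ) (x : Fin n → X) : ℝ := ∏ i, infoRatio u (x i, guess j i)
  have ratio_pos (x : Fin n → X) (hx : prodDist Q x ≠ 0) : 0 < ψ (G x) x :=
    prod_pos fun i _ => infoRatio_pos hu_nonneg (codeLaw_apply_pos hQ.1 code hx i)
  have ratio_sum_le (j : ℕ) : ∑ x, prodDist Q x * ψ j x ≤ 1 := by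
    rw [sum_prodDist_mul_prod Q fun i a => infoRatio u (a, guess j i),
      ← fstMarginal_codeLaw hQ code]
    exact prod_le_one
      (fun i _ => sum_nonneg fun a _ =>
        mul_nonneg (fstMarginal_nonneg hu_nonneg a) (infoRatio_nonneg hu_nonneg _))
      fun i _ => sum_fstMarginal_mul_infoRatio_le_one hu_nonneg _
  have log_loss := sum_mul_log_sub_sum_mul_log_le (isProbDist_prodDist hQ)
    (fun j x => prod_nonneg fun i _ => infoRatio_nonneg hu_nonneg _) ratio_sum_le ratio_pos hG
  rw [Fintype.card_fun, Fintype.card_fin, Nat.cast_pow, log_pow] at log_loss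
  have info_eq := mul_jointInfo_codeLaw hQ code
  linarith

end CodeLaw

lemma mul_rateDistortion_sub_klDiv_sub_log_le [Nonempty Y] [NeZero n] {d : X → Y → ℝ} {D : ℝ}
    {Q P : X → ℝ} {S : List (Fin n → Y)} (hQ : IsProbDist Q) (hP : ∀ a, 0 < P a)
    (hS : ∀ x : Fin n → X, ∃ y ∈ S, meanDist d x y ≤ D) :
    n * (rateDistortion d D Q - klDiv Q P) - log (1 + n * log (Fintype.card X))
      ≤ log (∑ x : Fin n → X, prodDist P x * countG d D S x) := by
  obtain ⟨guess, hguess⟩ := exists_meanDist_guess_countG_le d D S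
  have hG (x : Fin n → X) : 1 ≤ countG d D S x := one_le_countG (hS x)
  have hG_pos (x : Fin n → X) : (0 : ℝ) < countG d D S x := Nat.cast_pos.2 (hG x)
  have rate_le : n * rateDistortion d D Q
      ≤ n * jointInfo (codeLaw Q fun x => guess (countG d D S x)) := by
    gcongr
    exact rateDistortion_le_jointInfo_codeLaw hQ fun x => hguess x (hS x)
  have log_loss := mul_jointInfo_codeLaw_le hQ guess hG
  have change_of_measure := sum_mul_log_sub_klDiv_le_log (isProbDist_prodDist (n := n) hQ)
    (fun x _ => prodDist_pos hP x) (fun x _ => hG_pos x)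
    (fun x => (mul_pos (prodDist_pos hP x) (hG_pos x)).le) le_rfl
  rw [klDiv_prodDist hQ hP] at change_of_measure
  linarith

end Converse

section GreedyCovering

variable {α β : Type*} [Fintype β] {B : α → β → Prop} [∀ x y, Decidable (B x y)]
  {A : Finset α} {p : α → ℝ} {μ : β → ℝ}

/-- Average over `y` drawn with probability proportional to `μ`. -/
lemma exists_sum_le_mul_sum_filter_div (hA : A.Nonempty) (hp : ∀ x, 0 < p x)
    (hμ : ∀ y, 0 < μ y) (hB : ∀ x, ∃ y, B x y) :
    ∃ y, {x ∈ A | B x y}.Nonempty ∧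
      ∑ x ∈ A, p x ≤ (∑ y, μ y) * ∑ x ∈ A with B x y, p x / ∑ z with B x z, μ z := by
  let q (x : α) : ℝ := p x / ∑ z with B x z, μ z
  have mass_pos (x : α) : 0 < ∑ z with B x z, μ z := by
    obtain ⟨z, hz⟩ := hB x
    exact sum_pos (fun z _ => hμ z) ⟨z, by simpa using hz⟩
  have average : ∑ y, μ y * ∑ x ∈ A with B x y, q x = ∑ x ∈ A, p x := by
    calc ∑ y, μ y * ∑ x ∈ A with B x y, q x
        = ∑ x ∈ A, (∑ z with B x z, μ z) * q x := by
          simp only [sum_filter, mul_sum, sum_mul, mul_ite, ite_mul, mul_zero, zero_mul]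
          exact sum_comm
      _ = ∑ x ∈ A, p x := sum_congr rfl fun x _ => mul_div_cancel₀ _ (mass_pos x).ne'
  obtain ⟨x₀, hx₀⟩ := hA
  obtain ⟨y₀, -⟩ := hB x₀
  obtain ⟨y, -, hy⟩ : ∃ y ∈ (univ : Finset β),
      μ y * ∑ x ∈ A, p x ≤ μ y * ((∑ z, μ z) * ∑ x ∈ A with B x y, q x) := by
    refine exists_le_of_sum_le ⟨y₀, mem_univ y₀⟩ (le_of_eq ?_)
    simp only [mul_left_comm (μ _) (∑ z, μ z), ← mul_sum, ← sum_mul, average]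
  have sum_le := le_of_mul_le_mul_left hy (hμ y)
  refine ⟨y, nonempty_iff_ne_empty.2 fun h => ?_, sum_le⟩
  rw [h, sum_empty, mul_zero] at sum_le
  exact sum_le.not_gt (sum_pos (fun x _ => hp x) ⟨x₀, hx₀⟩)

lemma exists_list_sum_mul_findIdx_le (A : Finset α) (hp : ∀ x, 0 < p x) (hμ : ∀ y, 0 < μ y)
    (hB : ∀ x, ∃ y, B x y) :
    ∃ S : List β, (∀ x ∈ A, ∃ y ∈ S, B x y) ∧
      ∑ x ∈ A, p x * (S.findIdx (fun y => B x y) + 1 : ℕ)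
        ≤ (∑ y, μ y) * ∑ x ∈ A, p x / ∑ z with B x z, μ z := by
  induction A using Finset.strongInduction with
  | H A ih =>
  rcases A.eq_empty_or_nonempty with rfl | hA
  · exact ⟨[], by simp⟩
  obtain ⟨y, hit_nonempty, sum_le⟩ := exists_sum_le_mul_sum_filter_div hA hp hμ hB
  have missed_ssubset : {x ∈ A | ¬ B x y} ⊂ A := by
    obtain ⟨x, hx⟩ := hit_nonempty
    exact filter_ssubset.2 ⟨x, (mem_filter.1 hx).1, not_not.2 (mem_filter.1 hx).2⟩
  obtain ⟨S, hS, hS_sum⟩ := ih _ missed_ssubset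
  refine ⟨y :: S, fun x hx => ?_, ?_⟩
  · by_cases hxy : B x y
    · exact ⟨y, List.mem_cons_self, hxy⟩
    · obtain ⟨z, hz, hxz⟩ := hS x (mem_filter.2 ⟨hx, hxy⟩)
      exact ⟨z, List.mem_cons_of_mem y hz, hxz⟩
  have cost_cons (x : α) : p x * ((y :: S).findIdx (fun y => B x y) + 1 : ℕ)
      = p x + if ¬ B x y then p x * (S.findIdx (fun y => B x y) + 1 : ℕ) else 0 := by
    by_cases hxy : B x y
    · simp [List.findIdx_cons, hxy]
    · simp [List.findIdx_cons, hxy]; ring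
  calc ∑ x ∈ A, p x * ((y :: S).findIdx (fun y => B x y) + 1 : ℕ)
      = ∑ x ∈ A, p x + ∑ x ∈ A with ¬ B x y, p x * (S.findIdx (fun y => B x y) + 1 : ℕ) := by
        rw [sum_congr rfl fun x _ => cost_cons x, sum_add_distrib, sum_filter]
    _ ≤ (∑ y, μ y) * ∑ x ∈ A with B x y, p x / ∑ z with B x z, μ z
        + (∑ y, μ y) * ∑ x ∈ A with ¬ B x y, p x / ∑ z with B x z, μ z :=
        add_le_add sum_le hS_sum
    _ = (∑ y, μ y) * ∑ x ∈ A, p x / ∑ z with B x z, μ z := by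
        rw [← mul_add, sum_filter_add_sum_filter_not]

end GreedyCovering

section ConditionalTypes

variable {X Y : Type*} [DecidableEq X] [DecidableEq Y] {n : ℕ}

lemma letterCount_comp_perm (x : Fin n → X) (σ : Equiv.Perm (Fin n)) :
    letterCount (x ∘ σ) = letterCount x :=
  funext fun a => card_equiv σ (by simp)

variable [Fintype X] [Fintype Y]

lemma card_perm_comp_eq_self (x : Fin n → X) :
    #{σ : Equiv.Perm (Fin n) | x ∘ σ = x} = ∏ a, (letterCount x a).factorial := by
  have stabilizer_card := DomMulAct.stabilizer_card x
  simpa only [Fintype.card_subtype, letterCount] using stabilizer_card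

/-- Sequences `z` for which `(x, z)` has the same joint type as `(x, y)`. -/
def conditionalTypeClass (x : Fin n → X) (y : Fin n → Y) : Finset (Fin n → Y) :=
  {z | letterCount (fun i => (x i, z i)) = letterCount fun i => (x i, y i)}

lemma self_mem_conditionalTypeClass (x : Fin n → X) (y : Fin n → Y) :
    y ∈ conditionalTypeClass x y := by
  simp [conditionalTypeClass]

/-- The stabiliser of `x` in the symmetric group acts on the conditional type class of `y`, and
the permutations that give the same image of `y` form a coset of the stabiliser of `(x, y)`. -/
lemma prod_factorial_letterCount_le (x : Fin n → X) (y : Fin n → Y) :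
    ∏ a, (letterCount x a).factorial
      ≤ (∏ p, (letterCount (fun i => (x i, y i)) p).factorial)
        * #(conditionalTypeClass x y) := by
  rw [← card_perm_comp_eq_self x, ← card_perm_comp_eq_self fun i => (x i, y i)]
  refine card_le_mul_card_image_of_maps_to (f := fun σ : Equiv.Perm (Fin n) => y ∘ σ)
    (fun σ hσ => ?_) _ fun z _ => ?_
  · have hσx := (mem_filter.1 hσ).2
    refine mem_filter.2 ⟨mem_univ _, ?_⟩
    rw [← letterCount_comp_perm (fun i => (x i, y i)) σ]
    exact congrArg letterCount (funext fun i => Prod.ext (congrFun hσx i).symm rfl)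
  · let fiber : Finset (Equiv.Perm (Fin n)) := {σ ∈ {σ | x ∘ σ = x} | y ∘ σ = z}
    rcases fiber.eq_empty_or_nonempty with h | ⟨τ, hτ⟩
    · exact (card_eq_zero.2 h).trans_le (Nat.zero_le _)
    have mem_fiber {σ} (hσ : σ ∈ fiber) (j : Fin n) : x (σ j) = x j ∧ y (σ j) = z j := by
      simp only [fiber, mem_filter, mem_univ, true_and] at hσ
      exact ⟨congrFun hσ.1 j, congrFun hσ.2 j⟩
    refine card_le_card_of_injOn (· * τ⁻¹) (fun σ hσ => ?_) (mul_left_injective τ⁻¹).injOn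
    refine mem_coe.2 (mem_filter.2 ⟨mem_univ _, funext fun i => ?_⟩)
    obtain ⟨j, rfl⟩ := τ.surjective i
    have hσj := mem_fiber hσ j
    have hτj := mem_fiber hτ j
    simp [hσj, hτj]

lemma mul_sub_entropy_le_log_card_conditionalTypeClass (x : Fin n → X) (y : Fin n → Y) :
    n * (entropy (empDist fun i => (x i, y i)) - entropy (empDist x))
        - Fintype.card (X × Y) * (1 + log (n + 1))
      ≤ log #(conditionalTypeClass x y) := by
  have hclass : 0 < #(conditionalTypeClass x y) :=
    card_pos.2 ⟨y, self_mem_conditionalTypeClass x y⟩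
  have hfact {m : ℕ} : (m.factorial : ℝ) ≠ 0 := Nat.cast_ne_zero.2 m.factorial_ne_zero
  have counting := log_le_log (by exact_mod_cast prod_pos fun a _ => Nat.factorial_pos _)
    (Nat.cast_le (α := ℝ).2 (prod_factorial_letterCount_le x y))
  push_cast at counting
  rw [log_mul (prod_ne_zero_iff.2 fun _ _ => hfact) (Nat.cast_ne_zero.2 hclass.ne'),
    log_prod fun _ _ => hfact, log_prod fun _ _ => hfact] at counting
  have lower := le_sum_log_factorial_letterCount x
  have upper := sum_log_factorial_letterCount_le fun i => (x i, y i)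
  linarith

lemma exp_le_sum_maxLikelihood [NeZero n] {d : X → Y → ℝ} {D : ℝ} {x : Fin n → X}
    {y : Fin n → Y} (hy : meanDist d x y ≤ D) :
    exp (-(n * jointInfo (empDist fun i => (x i, y i))
        + Fintype.card (X × Y) * (1 + log (n + 1))))
      ≤ ∑ z with meanDist d x z ≤ D, maxLikelihood z := by
  have same_type {z : Fin n → Y} (hz : z ∈ conditionalTypeClass x y) :
      empDist (fun i => (x i, z i)) = empDist fun i => (x i, y i) :=
    empDist_eq_of_letterCount_eq (mem_filter.1 hz).2
  have class_subset :
      conditionalTypeClass x y ⊆ ({z | meanDist d x z ≤ D} : Finset _) := fun z hz => by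
    refine mem_filter.2 ⟨mem_univ z, le_trans (le_of_eq ?_) hy⟩
    have hz_mean := meanDist_eq_sum_empDist d fun i => (x i, z i)
    rw [same_type hz, ← meanDist_eq_sum_empDist d] at hz_mean
    exact hz_mean
  have same_likelihood {z : Fin n → Y} (hz : z ∈ conditionalTypeClass x y) :
      maxLikelihood z = maxLikelihood y := by
    have same_sndMarginal := congrArg sndMarginal (same_type hz)
    simp only [sndMarginal_empDist, Function.comp_def] at same_sndMarginal
    rw [← exp_log (maxLikelihood_pos z), ← exp_log (maxLikelihood_pos y), log_maxLikelihood,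
      log_maxLikelihood, same_sndMarginal]
  have hclass : (0 : ℝ) < #(conditionalTypeClass x y) :=
    Nat.cast_pos.2 (card_pos.2 ⟨y, self_mem_conditionalTypeClass x y⟩)
  calc exp (-(n * jointInfo (empDist fun i => (x i, y i))
        + Fintype.card (X × Y) * (1 + log (n + 1))))
      ≤ exp (log #(conditionalTypeClass x y) + log (maxLikelihood y)) := by
        refine exp_le_exp.2 ?_
        have class_card := mul_sub_entropy_le_log_card_conditionalTypeClass x y
        rw [jointInfo, fstMarginal_empDist, sndMarginal_empDist, log_maxLikelihood]
        simp only [Function.comp_def]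
        linarith
    _ = ∑ z ∈ conditionalTypeClass x y, maxLikelihood z := by
        rw [exp_add, exp_log hclass, exp_log (maxLikelihood_pos y),
          sum_congr rfl fun z hz => same_likelihood hz, sum_const, nsmul_eq_mul]
    _ ≤ ∑ z with meanDist d x z ≤ D, maxLikelihood z :=
        sum_le_sum_of_subset_of_nonneg class_subset fun z _ _ => (maxLikelihood_pos z).le

end ConditionalTypes

section TypeRounding

lemma exists_card_fiber_eq {α ι : Type*} [Fintype α] [Fintype ι] [DecidableEq ι] {m : ι → ℕ}
    (hm : ∑ i, m i = Fintype.card α) : ∃ f : α → ι, ∀ i, #{a | f a = i} = m i := by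
  classical
  let e : α ≃ Σ i, Fin (m i) := Fintype.equivOfCardEq (by simp [hm])
  refine ⟨fun a => (e a).1, fun i => ?_⟩
  rw [← Fintype.card_subtype, ← Fintype.card_fin (m i)]
  exact Fintype.card_congr
    ((e.subtypeEquiv fun _ => Iff.rfl).trans (Equiv.sigmaSubtype (β := fun i => Fin (m i)) i))

lemma exists_letterCount_prod_eq {X Y : Type*} [DecidableEq X] [DecidableEq Y] [Fintype Y]
    {n : ℕ} {x : Fin n → X} {m : X → Y → ℕ} (hm : ∀ a, ∑ b, m a b = letterCount x a) :
    ∃ y : Fin n → Y, ∀ a b, letterCount (fun i => (x i, y i)) (a, b) = m a b := by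
  have fiber_card (a : X) : ∑ b, m a b = Fintype.card {i // x i = a} := by
    rw [hm, letterCount, Fintype.card_subtype]
  choose f hf using fun a => exists_card_fiber_eq (fiber_card a)
  refine ⟨fun i => f (x i) ⟨i, rfl⟩, fun a b => ?_⟩
  rw [← hf a b, letterCount]
  refine (card_bij (fun (j : {i // x i = a}) _ => j.1) ?_ ?_ ?_).symm
  · rintro ⟨i, rfl⟩ hi
    simpa using hi
  · exact fun _ _ _ _ h => Subtype.ext h
  · intro i hi
    obtain ⟨rfl, hib⟩ := Prod.ext_iff.1 (mem_filter.1 hi).2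
    exact ⟨⟨i, rfl⟩, by simpa using hib, rfl⟩

lemma exists_nat_rounding {ι : Type*} [Fintype ι] {t : ι → ℝ} {N : ℕ} (ht : 0 ≤ t)
    (ht_sum : ∑ i, t i = N) (i₀ : ι) :
    ∃ m : ι → ℕ, ∑ i, m i = N ∧ (∀ i ≠ i₀, m i ≤ t i) ∧
      ∀ i, |m i - t i| ≤ Fintype.card ι := by
  classical
  let floors := ∑ i ∈ univ.erase i₀, ⌊t i⌋₊
  have floor_le (i : ι) : (⌊t i⌋₊ : ℝ) ≤ t i := Nat.floor_le (ht i)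
  have split_t : ∑ i ∈ univ.erase i₀, t i = N - t i₀ := by
    rw [← ht_sum, ← sum_erase_add _ _ (mem_univ i₀), add_sub_cancel_right]
  have floors_le : (floors : ℝ) ≤ N - t i₀ := by
    rw [← split_t]; push_cast [floors]; exact sum_le_sum fun i _ => floor_le i
  have le_floors : N - t i₀ ≤ floors + Fintype.card ι := by
    calc (N : ℝ) - t i₀ ≤ ∑ i ∈ univ.erase i₀, ((⌊t i⌋₊ : ℝ) + 1) := by
          rw [← split_t]; exact sum_le_sum fun i _ => (Nat.lt_floor_add_one _).le
      _ ≤ floors + Fintype.card ι := by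
          rw [sum_add_distrib, sum_const, nsmul_one]
          push_cast [floors]
          gcongr
          exact card_le_univ _
  have floors_le_N : floors ≤ N :=
    Nat.cast_le (α := ℝ).1 (floors_le.trans (sub_le_self _ (ht i₀)))
  refine ⟨Function.update (fun i => ⌊t i⌋₊) i₀ (N - floors), ?_, fun i hi => ?_, fun i => ?_⟩
  · rw [← sum_erase_add _ _ (mem_univ i₀), sum_update_of_notMem (notMem_erase _ _),
      Function.update_self]
    exact Nat.add_sub_cancel' floors_le_N
  · rw [Function.update_of_ne hi]
    exact floor_le i
  · rcases eq_or_ne i i₀ with rfl | hi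
    · rw [Function.update_self, Nat.cast_sub floors_le_N, abs_le]
      constructor <;> linarith
    · have card_pos : (1 : ℝ) ≤ Fintype.card ι :=
        Nat.one_le_cast.2 (Fintype.card_pos_iff.2 ⟨i₀⟩)
      rw [Function.update_of_ne hi, abs_le]
      constructor <;> linarith [floor_le i, Nat.lt_floor_add_one (t i)]

variable {X Y : Type*} [Fintype X] [Fintype Y] {n : ℕ}

/-- Rounding the joint law `v` to an `n`-type moves the fractional parts of each row to a letter
of least distortion, so the mean distortion does not increase. -/
lemma exists_empDist_near [DecidableEq X] [DecidableEq Y] [Nonempty Y] [NeZero n]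
    (d : X → Y → ℝ) {x : Fin n → X} {v : X × Y → ℝ} (hv : 0 ≤ v)
    (hvx : fstMarginal v = empDist x) :
    ∃ y : Fin n → Y, meanDist d x y ≤ ∑ p, v p * d p.1 p.2 ∧
      ∀ p, |empDist (fun i => (x i, y i)) p - v p| ≤ Fintype.card Y / n := by
  have hn : (0 : ℝ) < n := Nat.cast_pos.2 (NeZero.pos n)
  choose b₀ hb₀ using fun a => Finite.exists_min (d a)
  have row_sum (a : X) : ∑ b, n * v (a, b) = letterCount x a := by
    rw [← mul_sum, ← natCast_mul_empDist, ← hvx, fstMarginal]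
  choose m hm_sum hm_le hm_near using fun a =>
    exists_nat_rounding (fun b => mul_nonneg hn.le (hv (a, b))) (row_sum a) (b₀ a)
  obtain ⟨y, hy⟩ := exists_letterCount_prod_eq hm_sum
  have hemp (p : X × Y) : n * empDist (fun i => (x i, y i)) p = m p.1 p.2 := by
    rw [natCast_mul_empDist, hy]
  have row_le (a : X) : ∑ b, m a b * d a b ≤ ∑ b, n * v (a, b) * d a b := by
    have excess_le (b : Y) :
        (m a b - n * v (a, b)) * d a b ≤ (m a b - n * v (a, b)) * d a (b₀ a) := by
      rcases eq_or_ne b (b₀ a) with rfl | hb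
      · rfl
      · exact mul_le_mul_of_nonpos_left (hb₀ a b) (sub_nonpos.2 (hm_le a b hb))
    have excess_sum_le := sum_le_sum fun b (_ : b ∈ univ) => excess_le b
    rw [← sum_mul, sum_sub_distrib, row_sum a, ← Nat.cast_sum, hm_sum, sub_self,
      zero_mul] at excess_sum_le
    simpa only [sub_mul, sum_sub_distrib, sub_nonpos] using excess_sum_le
  refine ⟨y, le_of_mul_le_mul_left ?_ hn, fun p => ?_⟩
  · calc n * meanDist d x y = ∑ a, ∑ b, m a b * d a b := by
          rw [show meanDist d x y = _ from meanDist_eq_sum_empDist d fun i => (x i, y i), mul_sum,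
            Fintype.sum_prod_type]
          simp only [← mul_assoc, hemp]
      _ ≤ ∑ a, ∑ b, n * v (a, b) * d a b := sum_le_sum fun a _ => row_le a
      _ = n * ∑ p, v p * d p.1 p.2 := by
          simp only [mul_sum, Fintype.sum_prod_type, mul_assoc]
  · have scaled : n * |empDist (fun i => (x i, y i)) p - v p| = |m p.1 p.2 - n * v p| := by
      rw [← hemp, ← mul_sub, abs_mul, abs_of_pos hn]
    rw [le_div_iff₀' hn, scaled]
    exact hm_near p.1 p.2

lemma eventually_exists_jointInfo_le [DecidableEq X] [DecidableEq Y] [Nonempty Y]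
    {d : X → Y → ℝ} {D ε : ℝ} (hmin : ∀ a, ∃ b, d a b ≤ D) (hε : 0 < ε) :
    ∀ᶠ n : ℕ in atTop, ∀ x : Fin n → X, ∃ y : Fin n → Y, meanDist d x y ≤ D ∧
      jointInfo (empDist fun i => (x i, y i)) ≤ rateDistortion d D (empDist x) + ε := by
  have unif_cont : UniformContinuousOn (jointInfo (X := X) (Y := Y)) (Set.Icc 0 1) :=
    isCompact_Icc.uniformContinuousOn_of_continuous continuous_jointInfo.continuousOn
  obtain ⟨δ, hδ, hδ_near⟩ := Metric.uniformContinuousOn_iff.1 unif_cont (ε / 2) (half_pos hε)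
  have rounding_lt : ∀ᶠ n : ℕ in atTop, (Fintype.card Y / n : ℝ) < δ :=
    (tendsto_const_div_atTop_nhds_zero_nat _).eventually_lt_const hδ
  filter_upwards [rounding_lt, eventually_ne_atTop 0] with n hnδ hn x
  have : NeZero n := ⟨hn⟩
  obtain ⟨v, hv, hvx, hvd, hv_info⟩ :=
    exists_jointInfo_lt_rateDistortion_add (isProbDist_empDist x) hmin (half_pos hε)
  obtain ⟨y, hyd, hy_near⟩ := exists_empDist_near d hv hvx
  have hv_mem : v ∈ Set.Icc 0 1 := ⟨hv, fun p =>
    (le_fstMarginal hv p).trans (hvx ▸ empDist_le_one x p.1)⟩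
  have hdist : dist (empDist fun i => (x i, y i)) v < δ :=
    ((dist_pi_le_iff (by positivity)).2 hy_near).trans_lt hnδ
  have hinfo := hδ_near _ ⟨empDist_nonneg _, empDist_le_one _⟩ _ hv_mem hdist
  exact ⟨y, hyd.trans hvd, by linarith [(abs_lt.1 hinfo).2]⟩

end TypeRounding

section Exponent

lemma exists_list_meanDist_le {X Y : Type*} [Finite Y] {n : ℕ} [NeZero n] {d : X → Y → ℝ}
    {D : ℝ} (hmin : ∀ a, ∃ b, d a b ≤ D) :
    ∃ S : List (Fin n → Y), ∀ x, ∃ y ∈ S, meanDist d x y ≤ D := by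
  cases nonempty_fintype Y
  choose f hf using hmin
  refine ⟨univ.toList, fun x => ⟨f ∘ x, by simp, ?_⟩⟩
  have hn : (0 : ℝ) < n := Nat.cast_pos.2 (NeZero.pos n)
  rw [meanDist, one_div_mul_eq_div, div_le_iff₀' hn]
  calc ∑ i, d (x i) ((f ∘ x) i) ≤ ∑ _i : Fin n, D := sum_le_sum fun i _ => hf (x i)
    _ = n * D := by simp

variable {X Y : Type*} [Fintype X] [Fintype Y] {n : ℕ} {d : X → Y → ℝ} {D : ℝ} {P : X → ℝ}

/-- The best attainable value of `log E_P[G(X^n)]`: the infimum over the strategies of block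
length `n` that reach every source word. -/
noncomputable def minLogCount (d : X → Y → ℝ) (D : ℝ) (P : X → ℝ) (n : ℕ) : ℝ :=
  sInf {r | ∃ S : List (Fin n → Y), (∀ x : Fin n → X, ∃ y ∈ S, meanDist d x y ≤ D) ∧
    r = log (∑ x : Fin n → X, prodDist P x * (countG d D S x : ℝ))}

/-- The value of the variational problem `max_Q [R(D, Q) - D(Q‖P)]`, as a supremum. -/
noncomputable def rateGapSup (d : X → Y → ℝ) (D : ℝ) (P : X → ℝ) : ℝ :=
  sSup {r | ∃ Q : X → ℝ, IsProbDist Q ∧ r = rateDistortion d D Q - klDiv Q P}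

lemma exists_isProbDist (X : Type*) [Fintype X] [Nonempty X] : ∃ Q : X → ℝ, IsProbDist Q :=
  ⟨fun _ => (Fintype.card X : ℝ)⁻¹, fun _ => by positivity, by simp⟩

lemma rateDistortion_sub_klDiv_le_rateGapSup [Nonempty Y] (hmin : ∀ a, ∃ b, d a b ≤ D)
    (hP : ∀ a, 0 < P a) {Q : X → ℝ} (hQ : IsProbDist Q) :
    rateDistortion d D Q - klDiv Q P ≤ rateGapSup d D P := by
  obtain ⟨S, hS⟩ := exists_list_meanDist_le (n := 1) hmin
  refine le_csSup ⟨log (∑ x : Fin 1 → X, prodDist P x * countG d D S x)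
    + log (1 + log (Fintype.card X)), ?_⟩ ⟨Q, hQ, rfl⟩
  rintro _ ⟨Q', hQ', rfl⟩
  have converse := mul_rateDistortion_sub_klDiv_sub_log_le hQ' hP hS
  rw [Nat.cast_one, one_mul, one_mul] at converse
  linarith

section Converse

variable [Nonempty X] [Nonempty Y] [NeZero n]

lemma mul_rateGapSup_sub_log_le (hP : ∀ a, 0 < P a) {S : List (Fin n → Y)}
    (hS : ∀ x : Fin n → X, ∃ y ∈ S, meanDist d x y ≤ D) :
    n * rateGapSup d D P - log (1 + n * log (Fintype.card X))
      ≤ log (∑ x : Fin n → X, prodDist P x * countG d D S x) := by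
  have hn : (0 : ℝ) < n := Nat.cast_pos.2 (NeZero.pos n)
  obtain ⟨Q₀, hQ₀⟩ := exists_isProbDist X
  rw [sub_le_iff_le_add, ← le_div_iff₀' hn]
  refine csSup_le ⟨_, Q₀, hQ₀, rfl⟩ ?_
  rintro _ ⟨Q, hQ, rfl⟩
  rw [le_div_iff₀' hn, ← sub_le_iff_le_add]
  exact mul_rateDistortion_sub_klDiv_sub_log_le hQ hP hS

lemma mul_rateGapSup_sub_log_le_minLogCount (hmin : ∀ a, ∃ b, d a b ≤ D)
    (hP : ∀ a, 0 < P a) :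
    n * rateGapSup d D P - log (1 + n * log (Fintype.card X)) ≤ minLogCount d D P n := by
  obtain ⟨S₀, hS₀⟩ := exists_list_meanDist_le (n := n) hmin
  refine le_csInf ⟨_, S₀, hS₀, rfl⟩ ?_
  rintro _ ⟨S, hS, rfl⟩
  exact mul_rateGapSup_sub_log_le hP hS

lemma minLogCount_le {Y : Type*} [Finite Y] [Nonempty Y] {d : X → Y → ℝ} (hP : ∀ a, 0 < P a)
    {S : List (Fin n → Y)} (hS : ∀ x : Fin n → X, ∃ y ∈ S, meanDist d x y ≤ D) :
    minLogCount d D P n ≤ log (∑ x : Fin n → X, prodDist P x * countG d D S x) := by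
  cases nonempty_fintype Y
  refine csInf_le ⟨n * rateGapSup d D P - log (1 + n * log (Fintype.card X)), ?_⟩ ⟨S, hS, rfl⟩
  rintro _ ⟨T, hT, rfl⟩
  exact mul_rateGapSup_sub_log_le hP hT

end Converse

section Achievability

variable [DecidableEq X] [DecidableEq Y] [NeZero n]

lemma prodDist_div_sum_maxLikelihood_le (hP : ∀ a, 0 < P a) {x : Fin n → X} {y : Fin n → Y}
    {F : ℝ} (hy : meanDist d x y ≤ D)
    (hF : jointInfo (empDist fun i => (x i, y i)) - klDiv (empDist x) P ≤ F) :
    prodDist P x / ∑ z with meanDist d x z ≤ D, maxLikelihood z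
      ≤ maxLikelihood x * exp (n * F + Fintype.card (X × Y) * (1 + log (n + 1))) := by
  have mass_le := exp_le_sum_maxLikelihood hy
  have scaled := mul_le_mul_of_nonneg_left hF n.cast_nonneg
  rw [div_le_iff₀ ((exp_pos _).trans_le mass_le), ← prodDist_mul_exp_klDiv_empDist hP, mul_assoc,
    mul_assoc]
  refine le_mul_of_one_le_right (prodDist_pos hP x).le ?_
  calc (1 : ℝ) ≤ exp (n * klDiv (empDist x) P)
        * (exp (n * F + Fintype.card (X × Y) * (1 + log (n + 1)))
          * exp (-(n * jointInfo (empDist fun i => (x i, y i))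
            + Fintype.card (X × Y) * (1 + log (n + 1))))) := by
        rw [← exp_add, ← exp_add]
        exact one_le_exp (by linarith)
    _ ≤ _ := by gcongr

lemma exists_list_sum_mul_countG_le (hP : ∀ a, 0 < P a) {F : ℝ}
    (hF : ∀ x : Fin n → X, ∃ y : Fin n → Y, meanDist d x y ≤ D ∧
      jointInfo (empDist fun i => (x i, y i)) - klDiv (empDist x) P ≤ F) :
    ∃ S : List (Fin n → Y), (∀ x : Fin n → X, ∃ y ∈ S, meanDist d x y ≤ D) ∧
      ∑ x : Fin n → X, prodDist P x * (countG d D S x : ℝ)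
        ≤ (n + 1) ^ (Fintype.card X + Fintype.card Y)
          * exp (n * F + Fintype.card (X × Y) * (1 + log (n + 1))) := by
  classical
  choose f hfD hfF using hF
  obtain ⟨S, hS_univ, hS_sum⟩ := exists_list_sum_mul_findIdx_le
    (B := fun x y => meanDist d x y ≤ D) (univ : Finset (Fin n → X)) (prodDist_pos hP)
    maxLikelihood_pos fun x => ⟨f x, hfD x⟩
  have hS (x : Fin n → X) : ∃ y ∈ S, meanDist d x y ≤ D := hS_univ x (mem_univ x)
  refine ⟨S, hS, ?_⟩
  calc ∑ x : Fin n → X, prodDist P x * (countG d D S x : ℝ)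
      ≤ (∑ y : Fin n → Y, maxLikelihood y)
        * ∑ x : Fin n → X, prodDist P x / ∑ z with meanDist d x z ≤ D, maxLikelihood z := by
        simp only [countG_eq_findIdx_add_one (hS _)]
        convert hS_sum
    _ ≤ (∑ y : Fin n → Y, maxLikelihood y) * ∑ x : Fin n → X,
          maxLikelihood x * exp (n * F + Fintype.card (X × Y) * (1 + log (n + 1))) := by
        gcongr with x
        · exact sum_nonneg fun y _ => (maxLikelihood_pos y).le
        · exact prodDist_div_sum_maxLikelihood_le hP (hfD x) (hfF x)
    _ ≤ (n + 1) ^ Fintype.card Y * ((n + 1) ^ Fintype.card X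
          * exp (n * F + Fintype.card (X × Y) * (1 + log (n + 1)))) := by
        rw [← sum_mul]
        gcongr
        · exact mul_nonneg (sum_nonneg fun x _ => (maxLikelihood_pos x).le) (exp_pos _).le
        · exact sum_maxLikelihood_le
        · exact sum_maxLikelihood_le
    _ = _ := by ring

end Achievability

variable [Nonempty X] [Nonempty Y]

lemma eventually_minLogCount_le (hmin : ∀ a, ∃ b, d a b ≤ D) (hP : ∀ a, 0 < P a) {ε : ℝ}
    (hε : 0 < ε) :
    ∀ᶠ n : ℕ in atTop, minLogCount d D P n ≤ n * (rateGapSup d D P + ε)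
      + ((Fintype.card X + Fintype.card Y) * log (n + 1)
        + Fintype.card (X × Y) * (1 + log (n + 1))) := by
  classical
  filter_upwards [eventually_exists_jointInfo_le hmin hε, eventually_ne_atTop 0]
    with n hcode hn
  have : NeZero n := ⟨hn⟩
  obtain ⟨S, hS, hS_sum⟩ := exists_list_sum_mul_countG_le (n := n) (F := rateGapSup d D P + ε)
    hP fun x => by
      obtain ⟨y, hyD, hy_info⟩ := hcode x
      have gap_le := rateDistortion_sub_klDiv_le_rateGapSup hmin hP (isProbDist_empDist x)
      exact ⟨y, hyD, by linarith⟩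
  have sum_pos : 0 < ∑ x : Fin n → X, prodDist P x * (countG d D S x : ℝ) :=
    Finset.sum_pos (fun x _ => mul_pos (prodDist_pos hP x) (Nat.cast_pos.2 (one_le_countG (hS x))))
      univ_nonempty
  calc minLogCount d D P n ≤ log (∑ x : Fin n → X, prodDist P x * countG d D S x) :=
        minLogCount_le hP hS
    _ ≤ log ((n + 1) ^ (Fintype.card X + Fintype.card Y)
          * exp (n * (rateGapSup d D P + ε) + Fintype.card (X × Y) * (1 + log (n + 1)))) :=
        log_le_log sum_pos hS_sum
    _ = _ := by
        rw [log_mul (by positivity) (exp_ne_zero _), log_exp, log_pow]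
        push_cast
        ring

end Exponent

theorem stmt12_general {X Y : Type*} [Fintype X] [Fintype Y] [Nonempty X]
    (d : X → Y → ℝ) {D : ℝ} (hmin : ∀ x, ∃ y, d x y ≤ D) (P : X → ℝ) (hP : ∀ a, 0 < P a) :
    Tendsto (fun n : ℕ => 1 / (n : ℝ) * minLogCount d D P n) atTop (𝓝 (rateGapSup d D P)) := by
  have : Nonempty Y := (hmin (Classical.arbitrary X)).nonempty
  refine tendsto_order.2 ⟨fun a ha => ?_, fun a ha => ?_⟩
  · have log_term := tendsto_log_add_mul_natCast_div 1 (log_natCast_nonneg (Fintype.card X))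
    filter_upwards [log_term.eventually_lt_const (sub_pos.2 ha), eventually_ne_atTop 0]
      with n hlog hn
    have : NeZero n := ⟨hn⟩
    have hn_pos : (0 : ℝ) < n := Nat.cast_pos.2 (NeZero.pos n)
    have converse := mul_rateGapSup_sub_log_le_minLogCount (n := n) hmin hP
    rw [div_lt_iff₀ hn_pos] at hlog
    rw [one_div_mul_eq_div, lt_div_iff₀ hn_pos]
    linarith
  · let ε := (a - rateGapSup d D P) / 2
    have hε : 0 < ε := half_pos (sub_pos.2 ha)
    have log_term := tendsto_mul_log_add_mul_div (Fintype.card X + Fintype.card Y)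
      (Fintype.card (X × Y))
    filter_upwards [log_term.eventually_lt_const hε, eventually_minLogCount_le hmin hP hε,
      eventually_gt_atTop 0] with n hlog hcode hn
    have hn_pos : (0 : ℝ) < n := Nat.cast_pos.2 hn
    rw [div_lt_iff₀ hn_pos] at hlog
    rw [one_div_mul_eq_div, div_lt_iff₀ hn_pos]
    have two_mul_ε : 2 * ε = a - rateGapSup d D P := mul_div_cancel₀ _ two_ne_zero
    calc minLogCount d D P n < n * (rateGapSup d D P + ε) + ε * n := by linarith
      _ = a * n := by linear_combination (n : ℝ) * two_mul_ε

theorem stmt12 {X Y : Type*} [Fintype X] [Fintype Y] [Nonempty X] [Nonempty Y]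
    (d : X → Y → ℝ) (hd : ∀ x y, 0 ≤ d x y)
    (hzero : ∀ x, ∃ y, d x y = 0)
    (D : ℝ) (hD : 0 ≤ D)
    (P : X → ℝ) (hP : IsProbDist P) (hfull : ∀ a, 0 < P a) :
    Filter.liminf
        (fun n : ℕ => (1 / (n : ℝ)) *
          sInf {r | ∃ S : List (Fin n → Y),
            (∀ x : Fin n → X, ∃ y ∈ S, meanDist d x y ≤ D) ∧
            r = Real.log (∑ x : Fin n → X, prodDist P x * (countG d D S x : ℝ))})
        Filter.atTop
      = sSup {r | ∃ Q : X → ℝ, IsProbDist Q ∧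
          r = rateDistortion d D Q - klDiv Q P} :=
  (stmt12_general d (fun x => (hzero x).imp fun _ hy => hy.le.trans hD) P hfull).liminf_eq
end

section
/- (Conditional type covering lemma) For finite alphabets X, Y, Z, any distortion measure d on X × Y, any δ > 0, there is n₀ such that for n ≥ n₀, any z^n ∈ Z^n, any joint type Q of pairs in X^n × Z^n with Z-marginal equal to the type of z^n, and any D ≥ 0, there exists B_Z(z^n) ⊆ Y^n with (1/n) log|B_Z(z^n)| ≤ R_{X|Z}(D, Q) + δ and min_{y^n ∈ B_Z(z^n)} d^(n)(x^n, y^n) ≤ D for every x^n in the conditional type class T_V^n(z^n) determined by Q. -/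
open scoped BigOperators

/-- Conditional mutual information `I(X;Y|Z)` under the joint law `Q(x,z)W(y|x,z)`. -/
noncomputable def condMutualInfo {X Z Y : Type*} [Fintype X] [Fintype Z] [Fintype Y]
    (Q : X → Z → ℝ) (W : X → Z → Y → ℝ) : ℝ :=
  ∑ x, ∑ z, ∑ y, Q x z * W x z y *
    Real.log (W x z y * (∑ x', Q x' z) / (∑ x', Q x' z * W x' z y))

/-- Conditional rate-distortion function `R_{X|Z}(D,Q)` (side information at both
encoder and decoder). -/
noncomputable def condRateDistortion {X Z Y : Type*} [Fintype X] [Fintype Z] [Fintype Y]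
    (d : X → Y → ℝ) (D : ℝ) (Q : X → Z → ℝ) : ℝ :=
  sInf {r | ∃ W : X → Z → Y → ℝ, (∀ x z y, 0 ≤ W x z y) ∧
    (∀ x z, ∑ y, W x z y = 1) ∧
    (∑ x, ∑ z, ∑ y, Q x z * W x z y * d x y) ≤ D ∧
    r = condMutualInfo Q W}

/-- A joint probability distribution on `X × Z`. -/
def IsJointProbDist {X Z : Type*} [Fintype X] [Fintype Z] (p : X → Z → ℝ) : Prop :=
  (∀ x z, 0 ≤ p x z) ∧ ∑ x, ∑ z, p x z = 1

/-- Relative entropy between joint distributions on `X × Z`. -/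
noncomputable def klDiv2 {X Z : Type*} [Fintype X] [Fintype Z]
    (Q P : X → Z → ℝ) : ℝ :=
  ∑ x, ∑ z, Q x z * Real.log (Q x z / P x z)

/-- Joint empirical distribution of a pair of sequences. -/
noncomputable def jointEmpDist {X Z : Type*} [DecidableEq X] [DecidableEq Z] {n : ℕ}
    (x : Fin n → X) (z : Fin n → Z) (a : X) (b : Z) : ℝ :=
  ((Finset.univ.filter (fun i : Fin n => x i = a ∧ z i = b)).card : ℝ) / n

/-! Let `z` have length `n`, and let `k` be integer counts on `(Z × X) × Y` whose `Z × X` marginal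
is `n Q`. Double counting of labellings evaluates the sizes of conditional type classes exactly,
and Stirling's formula turns them into `exp (n H + O(log n))`. Each `x` in the class of `Q` given
`z` has `exp (n H(Y | Z, X) + O(log n))` sequences `y` of joint type `k` with `(z, x)`, and all of
these lie in one conditional class of size `exp (n H(Y | Z) + O(log n))`. Hence a greedy cover of
all `x` needs only `exp (n I(X; Y | Z) + O(log n))` sequences. Rounding `n Q W`, for a nearly
optimal test channel `W`, to such counts `k` without increasing the distortion changes `I` by
`o(1)`, uniformly in `Q` and `W` since `I` is continuous on a compact set. -/

section ConditionalTypeClass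

open Finset
open scoped Nat

variable {ι κ S Y : Type*} [Fintype ι] [DecidableEq ι]

theorem card_equiv_comp_eq [Fintype κ] [DecidableEq κ] [Fintype S] [DecidableEq S]
    {f : ι → S} {g : κ → S} (hfg : ∀ p, #{i | f i = p} = #{j | g j = p}) :
    #{e : ι ≃ κ | g ∘ e = f} = ∏ p, (#{i | f i = p})! := by
  have fiberEquiv (p : S) : Nonempty ({i // f i = p} ≃ {j // g j = p}) :=
    Fintype.card_eq.1 (by simpa only [Fintype.card_subtype] using hfg p)
  obtain ⟨e₀, he₀⟩ : ∃ e₀ : ι ≃ κ, g ∘ e₀ = f :=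
    ⟨.ofFiberEquiv fun p => (fiberEquiv p).some, funext fun i => Equiv.ofFiberEquiv_map _ i⟩
  have hperm : Fintype.card {σ : Equiv.Perm ι // f ∘ σ = f} =
      Fintype.card {e : ι ≃ κ // g ∘ e = f} :=
    Fintype.card_congr <| ((Equiv.refl ι).equivCongr e₀).subtypeEquiv fun σ => by
      subst he₀; rfl
  rw [← Fintype.card_subtype, ← hperm, DomMulAct.stabilizer_card]
  simp only [Fintype.card_subtype]

variable [Fintype S] [DecidableEq S] [Fintype Y] [DecidableEq Y]

/-- The sequences `y` such that the pair `(s, y)` has joint type `k`: the conditional type class of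
`k` given `s`, with types encoded by their integer counts. -/
def condTypeClass (s : ι → S) (k : S → Y → ℕ) : Finset (ι → Y) :=
  {y | ∀ a c, #{i | s i = a ∧ y i = c} = k a c}

theorem mem_condTypeClass {s : ι → S} {k : S → Y → ℕ} {y : ι → Y} :
    y ∈ condTypeClass s k ↔ ∀ a c, #{i | s i = a ∧ y i = c} = k a c := by
  simp [condTypeClass]

theorem card_equiv_sigma_comp_fst_eq {k : S → Y → ℕ} {s : ι → S} (y : ι → Y) :
    #{e : ι ≃ Σ p : S × Y, Fin (k p.1 p.2) | Sigma.fst ∘ e = fun i => (s i, y i)} =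
      if y ∈ condTypeClass s k then ∏ p : S × Y, (k p.1 p.2)! else 0 := by
  have card_fst (p : S × Y) : #{j : Σ p : S × Y, Fin (k p.1 p.2) | j.1 = p} = k p.1 p.2 := by
    rw [card_filter, Fintype.sum_sigma]
    simp [apply_ite card]
  split_ifs with hy
  · have hcount (p : S × Y) : #{i | (s i, y i) = p} = k p.1 p.2 := by
      simpa only [Prod.ext_iff] using mem_condTypeClass.1 hy p.1 p.2
    rw [card_equiv_comp_eq fun p => (hcount p).trans (card_fst p).symm]
    simp only [hcount]
  · refine card_eq_zero.2 (filter_eq_empty_iff.2 fun e _ he => hy ?_)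
    refine mem_condTypeClass.2 fun a c => ?_
    rw [← card_fst (a, c)]
    refine card_equiv e fun i => ?_
    have hi : (e i).1 = (s i, y i) := congrFun he i
    simp [hi]

theorem card_condTypeClass_mul {s : ι → S} {k : S → Y → ℕ}
    (hk : ∀ a, ∑ c, k a c = #{i | s i = a}) :
    #(condTypeClass s k) * ∏ p : S × Y, (k p.1 p.2)! = ∏ a, (#{i | s i = a})! := by
  let g : (Σ p : S × Y, Fin (k p.1 p.2)) → S := fun j => j.1.1
  have card_fst_fst (a : S) : #{j | g j = a} = ∑ c, k a c := by
    rw [card_filter, Fintype.sum_sigma, Fintype.sum_prod_type]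
    simp [g, apply_ite card]
  calc #(condTypeClass s k) * ∏ p : S × Y, (k p.1 p.2)!
      = ∑ y : ι → Y,
          #{e : ι ≃ Σ p : S × Y, Fin (k p.1 p.2) | Sigma.fst ∘ e = fun i => (s i, y i)} := by
        simp [card_equiv_sigma_comp_fst_eq]
    _ = #{e : ι ≃ Σ p : S × Y, Fin (k p.1 p.2) | g ∘ e = s} := by
        rw [card_eq_sum_card_fiberwise (f := fun e i => (e i).1.2) (t := univ) (by simp)]
        refine sum_congr rfl fun y _ => ?_
        rw [filter_filter]
        simp only [g, funext_iff, Prod.ext_iff, Function.comp_apply, forall_and]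
    _ = ∏ a, (#{i | s i = a})! :=
        card_equiv_comp_eq fun a => (hk a).symm.trans (card_fst_fst a).symm

theorem condTypeClass_nonempty {s : ι → S} {k : S → Y → ℕ}
    (hk : ∀ a, ∑ c, k a c = #{i | s i = a}) : (condTypeClass s k).Nonempty := by
  have hpos : 0 < ∏ a, (#{i | s i = a})! := prod_pos fun a _ => Nat.factorial_pos _
  rw [← card_condTypeClass_mul hk] at hpos
  exact card_pos.1 (Nat.pos_of_mul_pos_right hpos)

end ConditionalTypeClass

section GreedyCover

open Finset Real

theorem exists_finset_card_uncovered_le {α β : Type*} {A : Finset α} {T : Finset β}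
    (r : α → β → Prop) [∀ a b, Decidable (r a b)] {p : ℝ} (hp : p ≤ 1)
    (hr : ∀ a ∈ A, p * #T ≤ #{b ∈ T | r a b}) (hT : T.Nonempty) (M : ℕ) :
    ∃ B : Finset β, #B ≤ M ∧ (#{a ∈ A | ∀ b ∈ B, ¬r a b} : ℝ) ≤ (1 - p) ^ M * #A := by
  classical
  induction M with
  | zero => exact ⟨∅, by simp⟩
  | succ M ih =>
    obtain ⟨B, hBM, hB⟩ := ih
    set A' := {a ∈ A | ∀ b ∈ B, ¬r a b} with hA'
    obtain ⟨t, -, ht⟩ : ∃ t ∈ T, p * #A' ≤ #{a ∈ A' | r a t} := by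
      refine exists_le_of_sum_le hT ?_
      calc ∑ _t ∈ T, p * (#A' : ℝ) = ∑ _a ∈ A', p * #T := by
            simp only [sum_const, nsmul_eq_mul]; ring
        _ ≤ ∑ a ∈ A', (#{b ∈ T | r a b} : ℝ) := sum_le_sum fun a ha => hr a (mem_filter.1 ha).1
        _ = ∑ t ∈ T, (#{a ∈ A' | r a t} : ℝ) := by
          exact_mod_cast sum_card_bipartiteAbove_eq_sum_card_bipartiteBelow r
    refine ⟨insert t B, (card_insert_le _ _).trans (by lia), ?_⟩
    have huncovered : {a ∈ A | ∀ b ∈ insert t B, ¬r a b} = {a ∈ A' | ¬r a t} := by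
      simp only [hA', forall_mem_insert, filter_filter, and_comm]
    have hsplit : (#{a ∈ A' | r a t} : ℝ) + #{a ∈ A' | ¬r a t} = #A' := by
      exact_mod_cast card_filter_add_card_filter_not (r · t)
    calc (#{a ∈ A | ∀ b ∈ insert t B, ¬r a b} : ℝ) ≤ (1 - p) * #A' := by
          rw [huncovered]; linarith
      _ ≤ (1 - p) * ((1 - p) ^ M * #A) := mul_le_mul_of_nonneg_left hB (sub_nonneg.2 hp)
      _ = (1 - p) ^ (M + 1) * #A := by ring

theorem exists_finset_card_mul_le_of_le_card_filter {α β : Type*} {A : Finset α} {T : Finset β}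
    (hA : A.Nonempty) (r : α → β → Prop) [∀ a b, Decidable (r a b)] {m : ℝ} (hm : 0 < m)
    (hr : ∀ a ∈ A, m ≤ #{b ∈ T | r a b}) :
    ∃ B : Finset β, #B * m ≤ (log #A + 1) * #T ∧ ∀ a ∈ A, ∃ b ∈ B, r a b := by
  classical
  obtain ⟨a₀, ha₀⟩ := hA
  have hmT : m ≤ #T := (hr a₀ ha₀).trans (by exact_mod_cast card_filter_le _ _)
  have hT : (0 : ℝ) < #T := hm.trans_le hmT
  have hA : (0 : ℝ) < #A := by exact_mod_cast card_pos.2 ⟨a₀, ha₀⟩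
  set p := m / #T with hp
  have hp0 : 0 < p := by positivity
  have hp1 : p ≤ 1 := (div_le_one hT).2 hmT
  set M := ⌊log #A / p⌋₊ + 1 with hM
  have hMlt : log #A < p * M := by
    rw [mul_comm, ← div_lt_iff₀ hp0]
    exact_mod_cast Nat.lt_floor_add_one (log #A / p)
  obtain ⟨B, hBM, hB⟩ := exists_finset_card_uncovered_le r hp1
    (fun a ha => by rw [hp, div_mul_cancel₀ _ hT.ne']; exact hr a ha)
    (card_pos.1 (by exact_mod_cast hT)) M
  refine ⟨B, ?_, ?_⟩
  · have hBp : #B * p ≤ log #A + 1 :=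
      calc #B * p ≤ M * p := by gcongr
        _ = ⌊log #A / p⌋₊ * p + p := by rw [hM]; push_cast; ring
        _ ≤ log #A / p * p + 1 := by
          gcongr
          exact Nat.floor_le (by positivity)
        _ = log #A + 1 := by rw [div_mul_cancel₀ _ hp0.ne']
    calc #B * m = #B * p * #T := by rw [hp]; field_simp
      _ ≤ (log #A + 1) * #T := by gcongr
  · have h1p : 0 ≤ 1 - p := sub_nonneg.2 hp1
    have hlt_one : (#{a ∈ A | ∀ b ∈ B, ¬r a b} : ℝ) < 1 :=
      calc _ ≤ (1 - p) ^ M * #A := hB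
        _ ≤ exp (-p) ^ M * #A := by
          gcongr
          exact one_sub_le_exp_neg p
        _ = exp (log #A - p * M) := by
          rw [← exp_nat_mul, sub_eq_add_neg, exp_add, exp_log hA]; ring_nf
        _ < 1 := exp_lt_one_iff.2 (by linarith)
    have hempty : {a ∈ A | ∀ b ∈ B, ¬r a b} = ∅ :=
      card_eq_zero.1 (Nat.lt_one_iff.1 (by exact_mod_cast hlt_one))
    simpa [filter_eq_empty_iff] using hempty

end GreedyCover

section Entropy

open Finset Real
open scoped Nat

theorem neg_negMulLog_sub_le_log_factorial (m : ℕ) : -negMulLog m - m ≤ log m ! := by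
  rcases eq_or_ne m 0 with rfl | hm
  · simp
  · have hlog2pi : 0 ≤ log (2 * π) := log_nonneg (by linarith [pi_gt_three])
    rw [negMulLog_def]
    linarith [Stirling.le_log_factorial_stirling hm, log_natCast_nonneg m]

theorem log_factorial_le_neg_negMulLog_sub_add (m : ℕ) :
    log m ! ≤ -negMulLog m - m + (1 + log (m + 1)) := by
  rcases m with _ | m
  · simp
  · have hanti : log (Stirling.stirlingSeq (m + 1)) ≤ log (Stirling.stirlingSeq 1) :=
      Stirling.log_stirlingSeq'_antitone m.zero_le
    have hm : (0 : ℝ) < (m + 1 : ℕ) := by positivity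
    have hlog : 0 ≤ log (m + 1 : ℕ) := log_natCast_nonneg _
    have hmono : log (m + 1 : ℕ) ≤ log ((m + 1 : ℕ) + 1) := log_le_log hm (by linarith)
    rw [Stirling.log_stirlingSeq_formula, Stirling.stirlingSeq_one, log_mul two_ne_zero hm.ne',
      log_div hm.ne' (exp_ne_zero 1), log_div (exp_ne_zero 1) (by positivity), log_exp,
      log_sqrt zero_le_two] at hanti
    rw [negMulLog_def]
    linarith

variable {ι S Y : Type*} [Fintype S] [Fintype Y]

/-- The conditional entropy `H(Y | S)` of the weights `v`, which need not be normalised: it is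
`∑ v` times the conditional entropy of the law obtained from `v` by normalisation. -/
noncomputable def condEntropy (v : S → Y → ℝ) : ℝ :=
  ∑ a, (∑ c, negMulLog (v a c) - negMulLog (∑ c, v a c))

theorem condEntropy_eq_sum_mul_log (v : S → Y → ℝ) :
    condEntropy v = ∑ a, ∑ c, v a c * (log (∑ c', v a c') - log (v a c)) := by
  refine sum_congr rfl fun a _ => ?_
  simp only [negMulLog, mul_sub, sum_sub_distrib, ← sum_mul, neg_mul, sum_neg_distrib]
  ring

theorem condEntropy_const_mul (t : ℝ) (v : S → Y → ℝ) :
    condEntropy (fun a c => t * v a c) = t * condEntropy v := by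
  simp only [condEntropy, ← mul_sum, negMulLog_mul, sum_add_distrib, ← sum_mul]
  rw [mul_sum]
  exact sum_congr rfl fun a _ => by ring

theorem continuous_condEntropy : Continuous (condEntropy : (S → Y → ℝ) → ℝ) := by
  unfold condEntropy
  fun_prop

variable [Fintype ι] [DecidableEq ι] [DecidableEq S] [DecidableEq Y] {s : ι → S} {k : S → Y → ℕ}

theorem log_card_condTypeClass (hk : ∀ a, ∑ c, k a c = #{i | s i = a}) :
    log #(condTypeClass s k) = ∑ a, (log (∑ c, k a c)! - ∑ c, log (k a c)!) := by
  have hcard := congrArg (fun m : ℕ => log m) (card_condTypeClass_mul hk)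
  have hT : (#(condTypeClass s k) : ℝ) ≠ 0 := by
    exact_mod_cast (card_pos.2 (condTypeClass_nonempty hk)).ne'
  have hfac (m : ℕ) : (m ! : ℝ) ≠ 0 := by exact_mod_cast m.factorial_ne_zero
  push_cast at hcard
  rw [log_mul hT (prod_ne_zero_iff.2 fun p _ => hfac _), log_prod fun p _ => hfac _,
    log_prod fun a _ => hfac _, Fintype.sum_prod_type] at hcard
  simp only [hk, sum_sub_distrib]
  linarith

theorem log_card_condTypeClass_le (hk : ∀ a, ∑ c, k a c = #{i | s i = a}) :
    log #(condTypeClass s k) ≤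
      condEntropy (fun a c => (k a c : ℝ)) +
        Fintype.card S * (1 + log (Fintype.card ι + 1)) := by
  rw [log_card_condTypeClass hk, ← nsmul_eq_mul, ← card_univ (α := S), ← sum_const, condEntropy,
    ← sum_add_distrib]
  refine sum_le_sum fun a _ => ?_
  have hrow : ((∑ c, k a c : ℕ) : ℝ) ≤ Fintype.card ι := by
    rw [hk]
    exact_mod_cast card_le_univ _
  have herror : log ((∑ c, k a c : ℕ) + 1) ≤ log (Fintype.card ι + 1) := by gcongr
  have hupper := log_factorial_le_neg_negMulLog_sub_add (∑ c, k a c)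
  have hlower := sum_le_sum fun c (_ : c ∈ univ) => neg_negMulLog_sub_le_log_factorial (k a c)
  simp only [sum_sub_distrib, sum_neg_distrib] at hlower
  push_cast at hupper herror
  linarith

theorem le_log_card_condTypeClass (hk : ∀ a, ∑ c, k a c = #{i | s i = a}) :
    condEntropy (fun a c => (k a c : ℝ)) -
        Fintype.card S * Fintype.card Y * (1 + log (Fintype.card ι + 1)) ≤
      log #(condTypeClass s k) := by
  rw [log_card_condTypeClass hk, mul_assoc, ← nsmul_eq_mul, ← card_univ (α := S), ← sum_const,
    condEntropy, ← sum_sub_distrib]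
  refine sum_le_sum fun a _ => ?_
  have hentry (c : Y) : k a c ≤ Fintype.card ι :=
    calc k a c ≤ ∑ c, k a c := single_le_sum (fun _ _ => Nat.zero_le _) (mem_univ c)
      _ = #{i | s i = a} := hk a
      _ ≤ Fintype.card ι := card_le_univ _
  have hupper (c : Y) : log (k a c)! ≤
      -negMulLog (k a c) - k a c + (1 + log (Fintype.card ι + 1)) := by
    have herror : log ((k a c : ℝ) + 1) ≤ log (Fintype.card ι + 1) := by gcongr; exact hentry c
    linarith [log_factorial_le_neg_negMulLog_sub_add (k a c)]
  have hlower := neg_negMulLog_sub_le_log_factorial (∑ c, k a c)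
  have hupper := sum_le_sum fun c (_ : c ∈ univ) => hupper c
  simp only [sum_sub_distrib, sum_neg_distrib, sum_add_distrib, sum_const, card_univ,
    nsmul_eq_mul] at hupper
  push_cast at hlower
  linarith

end Entropy

section ConditionalInformation

open Finset Real

variable {ι X Y Z : Type*} [Fintype X] [Fintype Y] [Fintype Z]

/-- The conditional mutual information `I(X; Y | Z) = H(Y | Z) - H(Y | Z, X)` of the weights `v` on
`(Z × X) × Y`, not normalised, in the same sense as for `condEntropy`. -/
noncomputable def condInfo (v : Z × X → Y → ℝ) : ℝ :=
  condEntropy (fun b c => ∑ a, v (b, a) c) - condEntropy v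

theorem condInfo_const_mul (t : ℝ) (v : Z × X → Y → ℝ) :
    condInfo (fun p c => t * v p c) = t * condInfo v := by
  simp only [condInfo, ← mul_sum, condEntropy_const_mul, mul_sub]

theorem continuous_condInfo : Continuous (condInfo : (Z × X → Y → ℝ) → ℝ) :=
  .sub (continuous_condEntropy.comp (by fun_prop)) continuous_condEntropy

theorem exists_pos_condInfo_le_add (X Y Z : Type*) [Fintype X] [Fintype Y] [Fintype Z] {ε : ℝ}
    (hε : 0 < ε) :
    ∃ η > 0, ∀ v w : Z × X → Y → ℝ, v ∈ Set.Icc 0 1 → w ∈ Set.Icc 0 1 →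
      (∀ p c, |v p c - w p c| < η) → condInfo v ≤ condInfo w + ε := by
  have hcompact : IsCompact (Set.Icc (0 : Z × X → Y → ℝ) 1) := isCompact_Icc
  obtain ⟨η, hη, h⟩ := Metric.uniformContinuousOn_iff.1
    (hcompact.uniformContinuousOn_of_continuous continuous_condInfo.continuousOn) ε hε
  refine ⟨η, hη, fun v w hv hw hvw => ?_⟩
  have hdist : dist v w < η :=
    (dist_pi_lt_iff hη).2 fun p => (dist_pi_lt_iff hη).2 fun c => by
      rw [Real.dist_eq]; exact hvw p c
  have := h v hv w hw hdist
  rw [Real.dist_eq] at this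
  linarith [le_abs_self (condInfo v - condInfo w)]

/-- The joint law `Q(x, z) W(y | x, z)`, as weights on `(Z × X) × Y`. -/
def jointLaw (Q : X → Z → ℝ) (W : X → Z → Y → ℝ) : Z × X → Y → ℝ :=
  fun p c => Q p.2 p.1 * W p.2 p.1 c

theorem sum_jointLaw {X Y Z : Type*} [Fintype Y] {W : X → Z → Y → ℝ}
    (hW1 : ∀ a b, ∑ c, W a b c = 1) (Q : X → Z → ℝ) (p : Z × X) :
    ∑ c, jointLaw Q W p c = Q p.2 p.1 := by
  simp only [jointLaw, ← mul_sum, hW1, mul_one]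

theorem condMutualInfo_eq_condInfo {Q : X → Z → ℝ} {W : X → Z → Y → ℝ} (hQ : ∀ a b, 0 ≤ Q a b)
    (hW : ∀ a b c, 0 ≤ W a b c) (hW1 : ∀ a b, ∑ c, W a b c = 1) :
    condMutualInfo Q W = condInfo (jointLaw Q W) := by
  have hmarginal (b : Z) : ∑ c, ∑ a, jointLaw Q W (b, a) c = ∑ a, Q a b := by
    rw [sum_comm]
    exact sum_congr rfl fun a _ => sum_jointLaw hW1 Q (b, a)
  simp only [condInfo, condEntropy_eq_sum_mul_log, sum_jointLaw hW1, hmarginal,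
    Fintype.sum_prod_type, condMutualInfo]
  simp only [sum_mul, jointLaw]
  rw [sum_comm, ← sum_sub_distrib]
  refine sum_congr rfl fun b _ => ?_
  conv_rhs => enter [1]; rw [sum_comm]
  simp only [← sum_sub_distrib, ← mul_sub]
  refine sum_congr rfl fun a _ => sum_congr rfl fun c _ => ?_
  rcases eq_or_ne (Q a b * W a b c) 0 with h0 | h0
  · simp only [h0, zero_mul]
  · have hQ0 := left_ne_zero_of_mul h0
    have hW0 := right_ne_zero_of_mul h0
    have hQZ : ∑ a', Q a' b ≠ 0 := fun h =>
      hQ0 ((sum_eq_zero_iff_of_nonneg fun a' _ => hQ a' b).1 h a (mem_univ a))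
    have hQW : ∑ a', Q a' b * W a' b c ≠ 0 := fun h =>
      h0 ((sum_eq_zero_iff_of_nonneg fun a' _ => mul_nonneg (hQ a' b) (hW a' b c)).1 h a
        (mem_univ a))
    rw [log_div (mul_ne_zero hW0 hQZ) hQW, log_mul hW0 hQZ, log_mul hQ0 hW0]
    ring

theorem log_log_card_add_one_le [Fintype ι] {A : Finset (ι → X)} (hA : A.Nonempty) :
    log (log #A + 1) ≤ (Fintype.card X + 1) * (1 + log (Fintype.card ι + 1)) := by
  classical
  have hcard : (#A : ℝ) ≤ (Fintype.card X : ℝ) ^ Fintype.card ι := by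
    exact_mod_cast (card_le_univ A).trans_eq Fintype.card_fun
  set n := (Fintype.card ι : ℝ)
  set m := (Fintype.card X : ℝ)
  have hn : 0 ≤ n := Nat.cast_nonneg _
  have hm : 0 ≤ m := Nat.cast_nonneg _
  have hlogn : 0 ≤ log (n + 1) := log_nonneg (by linarith)
  have hlogA : log #A ≤ n * m :=
    calc log #A ≤ log (m ^ Fintype.card ι) :=
          log_le_log (by exact_mod_cast card_pos.2 hA) hcard
      _ = n * log m := log_pow _ _
      _ ≤ n * m := by gcongr; exact log_le_self hm
  calc log (log #A + 1) ≤ log ((n + 1) * (m + 1)) := by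
        refine log_le_log (by linarith [log_natCast_nonneg #A]) ?_
        linarith
    _ = log (n + 1) + log (m + 1) := log_mul (by positivity) (by positivity)
    _ ≤ log (n + 1) + m := by linarith [log_le_sub_one_of_pos (by positivity : 0 < m + 1)]
    _ ≤ (m + 1) * (1 + log (n + 1)) := by nlinarith

variable [DecidableEq X] [DecidableEq Y] [DecidableEq Z] [Fintype ι] [DecidableEq ι]

theorem mem_condTypeClass_sum_of_mem_pair {z : ι → Z} {x : ι → X} {y : ι → Y} {k : Z × X → Y → ℕ}
    (hy : y ∈ condTypeClass (fun i => (z i, x i)) k) :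
    y ∈ condTypeClass z (fun b c => ∑ a, k (b, a) c) := by
  refine mem_condTypeClass.2 fun b c => ?_
  rw [card_eq_sum_card_fiberwise (f := x) (t := univ) (by simp)]
  refine sum_congr rfl fun a _ => ?_
  rw [← mem_condTypeClass.1 hy (b, a) c, filter_filter]
  simp only [Prod.ext_iff, and_right_comm]

theorem exists_cover_condTypeClass (z : ι → Z) {k : Z × X → Y → ℕ}
    (hk : ∀ b, ∑ a, ∑ c, k (b, a) c = #{i | z i = b}) :
    ∃ B : Finset (ι → Y),
      log #B ≤ condInfo (fun p c => (k p c : ℝ)) +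
        (Fintype.card Z * Fintype.card X * Fintype.card Y + Fintype.card Z + Fintype.card X + 1) *
          (1 + log (Fintype.card ι + 1)) ∧
      ∀ x ∈ condTypeClass z (fun b a => ∑ c, k (b, a) c),
        ∃ y ∈ B, y ∈ condTypeClass (fun i => (z i, x i)) k := by
  set A := condTypeClass z (fun b a => ∑ c, k (b, a) c)
  set T := condTypeClass z (fun b c => ∑ a, k (b, a) c)
  have hkT (b : Z) : ∑ c, ∑ a, k (b, a) c = #{i | z i = b} := sum_comm.trans (hk b)
  obtain ⟨x₀, hx₀⟩ : A.Nonempty := condTypeClass_nonempty hk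
  set h := condEntropy (fun p c => (k p c : ℝ)) -
    Fintype.card (Z × X) * Fintype.card Y * (1 + log (Fintype.card ι + 1))
  have hneighbours (x) (hx : x ∈ A) :
      exp h ≤ #{y ∈ T | y ∈ condTypeClass (fun i => (z i, x i)) k} := by
    have hkx (p : Z × X) : ∑ c, k p c = #{i | (z i, x i) = p} := by
      simpa only [Prod.ext_iff] using (mem_condTypeClass.1 hx p.1 p.2).symm
    rw [filter_mem_eq_inter, inter_eq_right.2 fun y hy => mem_condTypeClass_sum_of_mem_pair hy,
      ← le_log_iff_exp_le (by exact_mod_cast card_pos.2 (condTypeClass_nonempty hkx))]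
    exact le_log_card_condTypeClass hkx
  obtain ⟨B, hBcard, hB⟩ := exists_finset_card_mul_le_of_le_card_filter ⟨x₀, hx₀⟩
    (fun x y => y ∈ condTypeClass (fun i => (z i, x i)) k) (exp_pos h) hneighbours
  refine ⟨B, ?_, hB⟩
  have hBpos : 0 < (#B : ℝ) := by
    obtain ⟨y, hy, -⟩ := hB x₀ hx₀
    exact_mod_cast card_pos.2 ⟨y, hy⟩
  have hTpos : 0 < (#T : ℝ) := by exact_mod_cast card_pos.2 (condTypeClass_nonempty hkT)
  have hApos : 0 < log #A + 1 := by linarith [log_natCast_nonneg #A]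
  have hlogB := log_le_log (by positivity) hBcard
  rw [log_mul hBpos.ne' (exp_ne_zero h), log_exp, log_mul hApos.ne' hTpos.ne'] at hlogB
  have hlogA := log_log_card_add_one_le ⟨x₀, hx₀⟩
  have hlogT := log_card_condTypeClass_le hkT
  simp only [h, Fintype.card_prod] at hlogB
  push_cast at hlogB hlogT
  rw [condInfo]
  linarith

end ConditionalInformation

section TestChannel

open Finset Real Filter

theorem eventually_mul_one_add_log_le (C : ℝ) {ε : ℝ} (hε : 0 < ε) :
    ∀ᶠ n : ℕ in atTop, C * (1 + log (n + 1)) ≤ ε * n := by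
  have hlittle : (fun x : ℝ => C * (1 + log x)) =o[atTop] id :=
    ((Asymptotics.isLittleO_const_id_atTop 1).add isLittleO_log_id_atTop).const_mul_left C
  have hsucc : Tendsto (fun n : ℕ => (n : ℝ) + 1) atTop atTop :=
    tendsto_atTop_add_const_right _ 1 tendsto_natCast_atTop_atTop
  filter_upwards [hsucc.eventually (hlittle.bound (half_pos hε)), eventually_ge_atTop 1]
    with n hbound hn
  have hn : (1 : ℝ) ≤ n := by exact_mod_cast hn
  rw [id, norm_of_nonneg (by positivity : (0 : ℝ) ≤ n + 1)] at hbound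
  nlinarith [le_norm_self (C * (1 + log ((n : ℝ) + 1)))]

theorem exists_rounding {Y : Type*} [Fintype Y] [Nonempty Y] {w : Y → ℝ} (hw : ∀ c, 0 ≤ w c)
    {N : ℕ} (hN : ∑ c, w c = N) (f : Y → ℝ) :
    ∃ k : Y → ℕ, ∑ c, k c = N ∧ (∀ c, |k c - w c| ≤ Fintype.card Y) ∧
      ∑ c, k c * f c ≤ ∑ c, w c * f c := by
  classical
  -- The mass lost by rounding down goes to a minimiser `c₀` of `f`, so the cost cannot increase.
  obtain ⟨c₀, hc₀⟩ := Finite.exists_min f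
  set r : Y → ℝ := fun c => w c - ⌊w c⌋₊ with hr
  have hr0 (c) : 0 ≤ r c := sub_nonneg.2 (Nat.floor_le (hw c))
  have hr1 (c) : r c ≤ 1 := by linarith [Nat.lt_floor_add_one (w c)]
  have hsum_r : ∑ c, r c = N - ∑ c, (⌊w c⌋₊ : ℝ) := by rw [hr, sum_sub_distrib, hN]
  have hfloor : ∑ c, ⌊w c⌋₊ ≤ N := by
    have := sum_nonneg fun c (_ : c ∈ univ) => hr0 c
    rw [hsum_r, sub_nonneg] at this
    exact_mod_cast this
  set k : Y → ℕ := fun c => ⌊w c⌋₊ + if c = c₀ then N - ∑ c, ⌊w c⌋₊ else 0 with hk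
  have hkw (c) : (k c : ℝ) = w c - r c + if c = c₀ then ∑ c, r c else 0 := by
    rw [hsum_r]
    simp only [hk, hr]
    split_ifs <;> push_cast [hfloor] <;> ring
  refine ⟨k, ?_, fun c => ?_, ?_⟩
  · simp [hk, sum_add_distrib, hfloor]
  · have hcard : (1 : ℝ) ≤ Fintype.card Y := by exact_mod_cast Fintype.card_pos
    have hsum_nonneg : 0 ≤ ∑ c, r c := sum_nonneg fun c _ => hr0 c
    have hsum_le : ∑ c, r c ≤ Fintype.card Y := by
      simpa using sum_le_sum fun c (_ : c ∈ univ) => hr1 c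
    rw [hkw, abs_le]
    split_ifs <;> constructor <;> linarith [hr0 c, hr1 c]
  · have hmin : (∑ c, r c) * f c₀ ≤ ∑ c, r c * f c := by
      rw [sum_mul]
      exact sum_le_sum fun c _ => mul_le_mul_of_nonneg_left (hc₀ c) (hr0 c)
    simp only [hkw, add_mul, sub_mul, sum_add_distrib, sum_sub_distrib, ite_mul, zero_mul,
      sum_ite_eq', mem_univ, if_true]
    linarith

variable {X Y Z : Type*} [Fintype X] [Fintype Y] [Fintype Z]

/-- `W` is a test channel for the level `D`: a conditional distribution `P(y | x, z)` competing in
the minimum that defines `condRateDistortion d D Q`. -/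
structure IsTestChannel (d : X → Y → ℝ) (D : ℝ) (Q : X → Z → ℝ) (W : X → Z → Y → ℝ) : Prop where
  nonneg : ∀ a b c, 0 ≤ W a b c
  sum_eq_one : ∀ a b, ∑ c, W a b c = 1
  distortion_le : ∑ a, ∑ b, ∑ c, Q a b * W a b c * d a c ≤ D

variable {d : X → Y → ℝ} {D : ℝ} {Q : X → Z → ℝ} {W : X → Z → Y → ℝ}

theorem exists_isTestChannel_of_forall_exists_eq_zero (hd : ∀ a, ∃ c, d a c = 0) (hD : 0 ≤ D)
    (Q : X → Z → ℝ) : ∃ W, IsTestChannel d D Q W := by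
  classical
  choose c hc using hd
  refine ⟨fun a _ => Pi.single (c a) 1, fun a _ c' => ?_, by simp, ?_⟩
  · rw [Pi.single_apply]
    positivity
  · simpa [Pi.single_apply, hc] using hD

theorem IsTestChannel.exists_condMutualInfo_lt (hW : IsTestChannel d D Q W) {r : ℝ}
    (hr : condRateDistortion d D Q < r) :
    ∃ W', IsTestChannel d D Q W' ∧ condMutualInfo Q W' < r := by
  obtain ⟨_, ⟨W', hnonneg, hsum, hdist, rfl⟩, hlt⟩ := exists_lt_of_csInf_lt
    (by exact ⟨_, W, hW.nonneg, hW.sum_eq_one, hW.distortion_le, rfl⟩) hr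
  exact ⟨W', ⟨hnonneg, hsum, hdist⟩, hlt⟩

theorem IsTestChannel.exists_counts (hW : IsTestChannel d D Q W) {n : ℕ} {N : X → Z → ℕ}
    (hN : ∀ a b, n * Q a b = N a b) :
    ∃ k : Z × X → Y → ℕ, (∀ p, ∑ c, k p c = N p.2 p.1) ∧
      (∀ p c, |k p c - n * jointLaw Q W p c| ≤ Fintype.card Y) ∧
      ∑ p, ∑ c, k p c * d p.2 c ≤ n * D := by
  have hrow (p : Z × X) : ∃ k : Y → ℕ, ∑ c, k c = N p.2 p.1 ∧
      (∀ c, |k c - n * jointLaw Q W p c| ≤ Fintype.card Y) ∧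
      ∑ c, k c * d p.2 c ≤ ∑ c, n * jointLaw Q W p c * d p.2 c := by
    have : Nonempty Y := by
      obtain ⟨c, -⟩ := nonempty_of_sum_ne_zero ((hW.sum_eq_one p.2 p.1).trans_ne one_ne_zero)
      exact ⟨c⟩
    refine exists_rounding (fun c => ?_) ?_ (d p.2)
    · rw [jointLaw, ← mul_assoc, hN]
      exact mul_nonneg (Nat.cast_nonneg _) (hW.nonneg ..)
    · rw [← mul_sum, sum_jointLaw hW.sum_eq_one, hN]
  choose k hk_sum hk_close hk_dist using hrow
  refine ⟨k, hk_sum, hk_close, ?_⟩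
  calc ∑ p, ∑ c, k p c * d p.2 c ≤ ∑ p : Z × X, ∑ c, n * jointLaw Q W p c * d p.2 c :=
        sum_le_sum fun p _ => hk_dist p
    _ = n * ∑ a, ∑ b, ∑ c, Q a b * W a b c * d a c := by
        simp only [Fintype.sum_prod_type_right, mul_sum, jointLaw, mul_assoc]
    _ ≤ n * D := by gcongr; exact hW.distortion_le

theorem mem_Icc_of_sum_le_one {S : Type*} {v : S → Y → ℝ} (hv : ∀ a c, 0 ≤ v a c)
    (hsum : ∀ a, ∑ c, v a c ≤ 1) : v ∈ Set.Icc 0 1 :=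
  ⟨hv, fun a c => (single_le_sum (fun c _ => hv a c) (mem_univ c)).trans (hsum a)⟩

theorem IsJointProbDist.le_one (hQ : IsJointProbDist Q) (a : X) (b : Z) : Q a b ≤ 1 :=
  calc Q a b ≤ ∑ b, Q a b := single_le_sum (fun b _ => hQ.1 a b) (mem_univ b)
    _ ≤ ∑ a, ∑ b, Q a b :=
      single_le_sum (f := fun a => ∑ b, Q a b) (fun a _ => sum_nonneg fun b _ => hQ.1 a b)
        (mem_univ a)
    _ = 1 := hQ.2

end TestChannel

section Covering

open Finset Real Filter

theorem sum_eq_of_mem_condTypeClass {ι S Y : Type*} [Fintype ι] [DecidableEq ι] [Fintype S]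
    [DecidableEq S] [Fintype Y] [DecidableEq Y] {s : ι → S} {k : S → Y → ℕ} {y : ι → Y}
    (hy : y ∈ condTypeClass s k) (f : S → Y → ℝ) :
    ∑ i, f (s i) (y i) = ∑ a, ∑ c, k a c * f a c := by
  rw [← sum_fiberwise' univ (fun i => (s i, y i)) (fun p => f p.1 p.2), Fintype.sum_prod_type]
  refine sum_congr rfl fun a _ => sum_congr rfl fun c _ => ?_
  rw [sum_const, nsmul_eq_mul, ← mem_condTypeClass.1 hy a c]
  simp only [Prod.ext_iff]

theorem eventually_condInfo_counts_le (X Y Z : Type*) [Fintype X] [Fintype Y] [Fintype Z] (C : ℝ)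
    {ε : ℝ} (hε : 0 < ε) :
    ∀ᶠ n : ℕ in atTop, ∀ (k : Z × X → Y → ℕ) (w : Z × X → Y → ℝ), (∀ p c, 0 ≤ w p c) →
      (∀ p, ∑ c, w p c ≤ 1) → (∀ p, ∑ c, (k p c : ℝ) = n * ∑ c, w p c) →
      (∀ p c, |k p c - n * w p c| ≤ C) →
      condInfo (fun p c => (k p c : ℝ)) ≤ n * (condInfo w + ε) := by
  obtain ⟨η, hη, hcont⟩ := exists_pos_condInfo_le_add X Y Z hε
  filter_upwards [(tendsto_const_div_atTop_nhds_zero_nat C).eventually_lt_const hη,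
    eventually_gt_atTop 0] with n hCn hn k w hw hw1 hsum hclose
  have hn : (0 : ℝ) < n := by exact_mod_cast hn
  have hk1 (p) : ∑ c, (n : ℝ)⁻¹ * k p c ≤ 1 := by
    rw [← mul_sum, hsum, inv_mul_cancel_left₀ hn.ne']
    exact hw1 p
  have hη (p c) : |(n : ℝ)⁻¹ * k p c - w p c| < η := by
    refine lt_of_le_of_lt ((le_div_iff₀' hn).2 ?_) hCn
    calc n * |(n : ℝ)⁻¹ * k p c - w p c| = |k p c - n * w p c| := by
          rw [← abs_of_pos hn, ← abs_mul, abs_of_pos hn, mul_sub, mul_inv_cancel_left₀ hn.ne']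
      _ ≤ C := hclose p c
  have := hcont (fun p c => (n : ℝ)⁻¹ * k p c) w
    (mem_Icc_of_sum_le_one (fun p c => by positivity) hk1) (mem_Icc_of_sum_le_one hw hw1) hη
  rwa [condInfo_const_mul, inv_mul_le_iff₀ hn] at this

theorem eventually_exists_cover_of_isTestChannel (X Y Z : Type*) [Fintype X] [Fintype Y]
    [Fintype Z] [DecidableEq X] [DecidableEq Z] {ε : ℝ} (hε : 0 < ε) :
    ∀ᶠ n : ℕ in atTop, ∀ z : Fin n → Z, ∀ Q : X → Z → ℝ, IsJointProbDist Q →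
      (∀ a b, ∃ k : ℕ, Q a b = (k : ℝ) / n) → (∀ b, ∑ a, Q a b = empDist z b) →
      ∀ (d : X → Y → ℝ) (D : ℝ) (W : X → Z → Y → ℝ), IsTestChannel d D Q W →
      ∃ B : Finset (Fin n → Y), (1 / (n : ℝ)) * log #B ≤ condMutualInfo Q W + ε ∧
        ∀ x : Fin n → X, (∀ a b, jointEmpDist x z a b = Q a b) →
          ∃ y ∈ B, meanDist d x y ≤ D := by
  classical
  filter_upwards [eventually_condInfo_counts_le X Y Z (Fintype.card Y) (half_pos hε),
    eventually_mul_one_add_log_le (Fintype.card Z * Fintype.card X * Fintype.card Y +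
      Fintype.card Z + Fintype.card X + 1) (half_pos hε),
    eventually_gt_atTop 0] with n hinfo herror hn z Q hQ hQn hz d D W hW
  choose N hN using hQn
  have hn : (0 : ℝ) < n := by exact_mod_cast hn
  have hNQ (a b) : n * Q a b = N a b := by rw [hN, mul_div_cancel₀ _ hn.ne']
  obtain ⟨k, hkN, hkW, hkd⟩ := hW.exists_counts hNQ
  have hkz (b) : ∑ a, ∑ c, k (b, a) c = #{i | z i = b} := by
    have := hz b
    simp only [hN, empDist, ← sum_div, div_left_inj' hn.ne'] at this
    simp only [hkN]
    exact_mod_cast this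
  obtain ⟨B, hBcard, hB⟩ := exists_cover_condTypeClass z hkz
  refine ⟨B, ?_, fun x hx => ?_⟩
  · have hrow := sum_jointLaw hW.sum_eq_one Q
    have hkrow (p) : ∑ c, (k p c : ℝ) = n * ∑ c, jointLaw Q W p c := by
      rw [hrow, hNQ, ← hkN, Nat.cast_sum]
    have hIk := hinfo k (jointLaw Q W) (fun p c => mul_nonneg (hQ.1 _ _) (hW.nonneg ..))
      (fun p => (hrow p).trans_le (hQ.le_one _ _)) hkrow hkW
    rw [← condMutualInfo_eq_condInfo hQ.1 hW.nonneg hW.sum_eq_one] at hIk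
    rw [Fintype.card_fin] at hBcard
    rw [one_div_mul_eq_div, div_le_iff₀' hn]
    linarith
  · obtain ⟨y, hyB, hy⟩ := hB x <| mem_condTypeClass.2 fun b a => by
      have := hx a b
      rw [jointEmpDist, hN, div_left_inj' hn.ne', Nat.cast_inj] at this
      simpa only [hkN, and_comm] using this
    refine ⟨y, hyB, ?_⟩
    rw [meanDist, one_div_mul_eq_div, div_le_iff₀' hn]
    exact (sum_eq_of_mem_condTypeClass hy fun p c => d p.2 c).trans_le hkd

theorem stmt16_general (X Y Z : Type*) [Fintype X] [Fintype Y] [Fintype Z] [DecidableEq X]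
    [DecidableEq Z] {δ : ℝ} (hδ : 0 < δ) :
    ∃ n₀ : ℕ, ∀ n ≥ n₀, ∀ z : Fin n → Z, ∀ Q : X → Z → ℝ,
      IsJointProbDist Q →
      (∀ a b, ∃ k : ℕ, Q a b = (k : ℝ) / n) →
      (∀ b, ∑ a, Q a b = empDist z b) →
      ∀ (d : X → Y → ℝ) (D : ℝ), (∃ W, IsTestChannel d D Q W) →
      ∃ B : Finset (Fin n → Y),
        (1 / (n : ℝ)) * log #B ≤ condRateDistortion d D Q + δ ∧
        ∀ x : Fin n → X, (∀ a b, jointEmpDist x z a b = Q a b) →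
          ∃ y ∈ B, meanDist d x y ≤ D := by
  obtain ⟨n₀, hn₀⟩ := eventually_atTop.1 <|
    eventually_exists_cover_of_isTestChannel X Y Z (half_pos hδ)
  refine ⟨n₀, fun n hn z Q hQ hQn hz d D ⟨W₀, hW₀⟩ => ?_⟩
  obtain ⟨W, hW, hlt⟩ := hW₀.exists_condMutualInfo_lt
    (lt_add_of_pos_right (condRateDistortion d D Q) (half_pos hδ))
  obtain ⟨B, hBcard, hB⟩ := hn₀ n hn z Q hQ hQn hz d D W hW
  exact ⟨B, by linarith, hB⟩

end Covering

theorem stmt16 {X Z Y : Type*} [Fintype X] [Fintype Z] [Fintype Y]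
    [DecidableEq X] [DecidableEq Z] [Nonempty X] [Nonempty Z] [Nonempty Y]
    (d : X → Y → ℝ) (hd : ∀ x y, 0 ≤ d x y)
    (hzero : ∀ x, ∃ y, d x y = 0)
    (δ : ℝ) (hδ : 0 < δ) :
    ∃ n₀ : ℕ, ∀ n ≥ n₀, ∀ z : Fin n → Z, ∀ Q : X → Z → ℝ,
      IsJointProbDist Q →
      (∀ a b, ∃ k : ℕ, Q a b = (k : ℝ) / n) →
      (∀ b, ∑ a, Q a b = empDist z b) →
      ∀ D : ℝ, 0 ≤ D →
      ∃ B : Finset (Fin n → Y),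
        (1 / (n : ℝ)) * Real.log (B.card : ℝ) ≤ condRateDistortion d D Q + δ ∧
        ∀ x : Fin n → X, (∀ a b, jointEmpDist x z a b = Q a b) →
          ∃ y ∈ B, meanDist d x y ≤ D := by
  obtain ⟨n₀, hn₀⟩ := stmt16_general X Y Z hδ
  exact ⟨n₀, fun n hn z Q hQ hQn hz D hD => hn₀ n hn z Q hQ hQn hz d D
    (exists_isTestChannel_of_forall_exists_eq_zero hzero hD Q)⟩
end
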